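/- Let ε,b > 0 and let c:(−ε,b) → ℝ^{n+2} be smooth with ⟨c(t),c(t)⟩ = 0, c(t) ≠ 0 and ⟨c′(t),c′(t)⟩ = 1 for all t. Let λ ∈ ℝ with 2λ > 1 and fix p ∈ (0,b). Let T:(0,b) → End(ℝ^{n+2}) be differentiable with T(p) = id and T′(t) = (λ/t²)·(T(t)∘(c(t)∧c′(t))), and let ĉ:(0,b) → ℝ^{n+2} be differentiable, nowhere zero, with ⟨ĉ(t),ĉ(t)⟩ = 0 for all t and ĉ′(t) = −(λ/t²)·(⟨c(t),ĉ(t)⟩c′(t) − ⟨c′(t),ĉ(t)⟩c(t)). Suppose ĉ(p) IS a projective accumulation point at 0 of the curve t ↦ T(t)(c(t)). Then: (i) every projective accumulation point of ĉ at 0 lies in the 3-dimensional subspace span{c(0), c′(0), c″(0)} (hence on the curvature circle of the curve at 0, being null); (ii) c(0) is a projective accumulation point of ĉ at 0, and so is any null vector c̄₀ ∈ span{c(0), c′(0), c″(0)} with ⟨c̄₀,c(0)⟩ = −1 and ⟨c̄₀,c′(0)⟩ = 0 (such c̄₀ exists); in particular ĉ does not converge projectively as t → 0⁺. -/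

import Mathlib

open scoped BigOperators Topology
open Filter Set MeasureTheory

noncomputable section

abbrev E (n : ℕ) := EuclideanSpace ℝ (Fin (n + 2))

/-- Minkowski inner product of signature (n+1,1). -/
def mink {n : ℕ} (x y : E n) : ℝ :=
  ∑ i, (if i = Fin.last (n + 1) then (-1 : ℝ) else 1) * x i * y i

variable {n : ℕ}

lemma mink_comm (x y : E n) : mink x y = mink y x :=
  Finset.sum_congr rfl fun i _ => by ring

lemma mink_add_right (v x y : E n) : mink v (x + y) = mink v x + mink v y := by
  simp [mink, mul_add, Finset.sum_add_distrib]

lemma mink_smul_right (v : E n) (c : ℝ) (x : E n) : mink v (c • x) = c * mink v x := by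
  unfold mink
  rw [Finset.mul_sum]
  refine Finset.sum_congr rfl fun i _ => ?_
  simp only [PiLp.smul_apply, smul_eq_mul]
  ring

lemma mink_add_left (x y v : E n) : mink (x + y) v = mink x v + mink y v := by
  rw [mink_comm, mink_add_right, mink_comm v x, mink_comm v y]

lemma mink_smul_left (c : ℝ) (x v : E n) : mink (c • x) v = c * mink x v := by
  rw [mink_comm, mink_smul_right, mink_comm v x]

/-- `v ∧ w` as an endomorphism: `x ↦ ⟨v,x⟩ w − ⟨w,x⟩ v`. -/
def wedge {n : ℕ} (v w : E n) : E n →L[ℝ] E n :=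
  LinearMap.toContinuousLinearMap
    { toFun := fun x => mink v x • w - mink w x • v
      map_add' := by
        intro x y
        simp only [mink_add_right, add_smul]
        abel
      map_smul' := by
        intro c x
        simp only [mink_smul_right, RingHom.id_apply, mul_smul, smul_sub] }

/-- rank one endomorphism `vw* : x ↦ ⟨x,w⟩ v`. -/
def rankOne {n : ℕ} (v w : E n) : E n →L[ℝ] E n :=
  LinearMap.toContinuousLinearMap
    { toFun := fun x => mink x w • v
      map_add' := by
        intro x y
        simp only [mink_add_left, add_smul]
      map_smul' := by
        intro c x
        simp only [mink_smul_left, RingHom.id_apply, mul_smul] }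

/-- A nonzero `x` is a projective accumulation point at `0` of a curve
`γ : (0,b) → ℝ^{n+2} ∖ {0}` if some sequence `tᵢ → 0⁺` in `(0,b)` and reals `rᵢ`
satisfy `rᵢ • γ (tᵢ) → x`. -/
def projAccum {n : ℕ} (b : ℝ) (γ : ℝ → E n) (x : E n) : Prop :=
  ∃ (ts : ℕ → ℝ) (rs : ℕ → ℝ), (∀ i, ts i ∈ Set.Ioo (0:ℝ) b) ∧
    Tendsto ts atTop (𝓝 0) ∧ Tendsto (fun i => rs i • γ (ts i)) atTop (𝓝 x)


/-! ### basic facts on the Minkowski form -/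

def Jm {n : ℕ} : E n →L[ℝ] E n :=
  LinearMap.toContinuousLinearMap
    { toFun := fun x => WithLp.toLp 2 (fun i => (if i = Fin.last (n + 1) then (-1 : ℝ) else 1) * x i)
      map_add' := by
        intro x y
        ext i
        simp [mul_add]
      map_smul' := by
        intro r x
        ext i
        simp only [PiLp.smul_apply, smul_eq_mul, RingHom.id_apply]
        ring }

lemma Jm_apply (x : E n) (i : Fin (n + 2)) :
    Jm x i = (if i = Fin.last (n + 1) then (-1 : ℝ) else 1) * x i := rfl

lemma mink_eq_inner (x y : E n) : mink x y = inner ℝ (Jm x) y := by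
  simp only [mink, PiLp.inner_apply, Jm_apply, RCLike.inner_apply, conj_trivial]
  refine Finset.sum_congr rfl fun i _ => ?_
  ring

lemma Jm_Jm (x : E n) : Jm (Jm x) = x := by
  ext i
  rw [Jm_apply, Jm_apply]
  split_ifs <;> ring

lemma norm_Jm (x : E n) : ‖Jm x‖ = ‖x‖ := by
  rw [EuclideanSpace.norm_eq, EuclideanSpace.norm_eq]
  congr 1
  refine Finset.sum_congr rfl fun i _ => ?_
  rw [Jm_apply]
  split_ifs <;> simp

lemma mink_Jm (x y : E n) : mink (Jm x) y = inner ℝ x y := by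
  rw [mink_eq_inner, Jm_Jm]

lemma abs_mink_le (x y : E n) : |mink x y| ≤ ‖x‖ * ‖y‖ := by
  rw [mink_eq_inner, ← norm_Jm x]
  exact abs_real_inner_le_norm _ _

lemma mink_nondeg {x : E n} (h : ∀ y, mink x y = 0) : x = 0 := by
  have h1 : Jm x = 0 := by
    have := h (Jm x)
    rw [mink_eq_inner] at this
    exact inner_self_eq_zero.1 this
  rw [← Jm_Jm x, h1, map_zero]

lemma mink_ext {x y : E n} (h : ∀ z, mink x z = mink y z) : x = y := by
  rw [← sub_eq_zero]
  apply mink_nondeg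
  intro z
  rw [mink_eq_inner, map_sub, inner_sub_left, ← mink_eq_inner, ← mink_eq_inner, h z, sub_self]

lemma mink_neg_left (x y : E n) : mink (-x) y = - mink x y := by
  simp [mink_eq_inner]
lemma mink_neg_right (x y : E n) : mink x (-y) = - mink x y := by
  simp [mink_eq_inner]
lemma mink_sub_left (x y z : E n) : mink (x - y) z = mink x z - mink y z := by
  simp [mink_eq_inner, inner_sub_left]
lemma mink_sub_right (x y z : E n) : mink x (y - z) = mink x y - mink x z := by
  simp [mink_eq_inner, inner_sub_right]
lemma mink_zero_left (y : E n) : mink 0 y = 0 := by simp [mink_eq_inner]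
lemma mink_zero_right (y : E n) : mink y 0 = 0 := by simp [mink_eq_inner]

lemma HasDerivAt.mink' {f g : ℝ → E n} {f' g' : E n} {t : ℝ}
    (hf : HasDerivAt f f' t) (hg : HasDerivAt g g' t) :
    HasDerivAt (fun s => mink (f s) (g s)) (mink (f t) g' + mink f' (g t)) t := by
  simp only [mink_eq_inner]
  exact (Jm.hasFDerivAt.comp_hasDerivAt t hf).inner ℝ hg

lemma tendsto_mink {ι : Type*} {l : Filter ι} {f g : ι → E n} {x y : E n}
    (hf : Tendsto f l (𝓝 x)) (hg : Tendsto g l (𝓝 y)) :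
    Tendsto (fun i => mink (f i) (g i)) l (𝓝 (mink x y)) := by
  simp only [mink_eq_inner]
  exact ((Jm.continuous.tendsto x).comp hf).inner hg

def minkL {n : ℕ} (x : E n) : E n →L[ℝ] ℝ := innerSL ℝ (Jm x)

lemma minkL_apply (x y : E n) : minkL x y = mink x y := by
  rw [mink_eq_inner]; rfl

/-- the Minkowski projection along the span of a null frame -/
def prj {n : ℕ} (c d g : E n) : E n →L[ℝ] E n :=
  ContinuousLinearMap.id ℝ (E n) + (minkL g).smulRight c - (minkL d).smulRight d
    + (minkL c).smulRight g

lemma prj_apply (c d g x : E n) :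
    prj c d g x = x + mink g x • c - mink d x • d + mink c x • g := by
  simp [prj, minkL_apply]

lemma prj_symm (c d g x y : E n) : mink (prj c d g x) y = mink x (prj c d g y) := by
  simp only [prj_apply, mink_add_left, mink_add_right, mink_sub_left, mink_sub_right,
    mink_smul_left, mink_smul_right]
  rw [mink_comm x c, mink_comm x d, mink_comm x g]
  ring

/-- adjoint -/
def shp {n : ℕ} (A : E n →L[ℝ] E n) (y : E n) : E n :=
  ∑ i, mink y (A (EuclideanSpace.single i 1)) • Jm (EuclideanSpace.single i 1)

lemma mink_sum_left {ι : Type*} (s : Finset ι) (f : ι → E n) (v : E n) :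
    mink (∑ i ∈ s, f i) v = ∑ i ∈ s, mink (f i) v := by
  simp [mink_eq_inner, sum_inner]
lemma mink_sum_right {ι : Type*} (s : Finset ι) (f : ι → E n) (v : E n) :
    mink v (∑ i ∈ s, f i) = ∑ i ∈ s, mink v (f i) := by
  simp [mink_eq_inner, inner_sum]

lemma eq_sum_single (v : E n) : v = ∑ i, v i • EuclideanSpace.single i (1 : ℝ) := by
  ext j
  simp [Finset.sum_apply, Pi.single_apply]

lemma mink_shp (A : E n →L[ℝ] E n) (y v : E n) : mink (shp A y) v = mink y (A v) := by
  conv_rhs => rw [eq_sum_single v]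
  simp only [shp, map_sum, map_smul, mink_sum_left, mink_sum_right, mink_smul_left,
    mink_smul_right, mink_Jm]
  refine Finset.sum_congr rfl fun i _ => ?_
  rw [EuclideanSpace.inner_single_left]
  simp [mul_comm]

lemma HasDerivAt.shp' {A : ℝ → E n →L[ℝ] E n} {A' : E n →L[ℝ] E n} {t : ℝ}
    (h : HasDerivAt A A' t) (y : E n) :
    HasDerivAt (fun s => shp (A s) y) (shp A' y) t := by
  unfold shp
  refine HasDerivAt.fun_sum fun i _ => ?_
  have h1 : HasDerivAt (fun s => A s (EuclideanSpace.single i 1)) (A' (EuclideanSpace.single i 1)) t :=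
    h.clm_apply (hasDerivAt_const t _) |>.congr_deriv (by simp)
  have h2 := (hasDerivAt_const t y).mink' h1
  rw [mink_zero_left, add_zero] at h2
  exact h2.smul_const _

lemma bdd_of_mink {s : Set ℝ} {f : ℝ → E n}
    (h : ∀ y : E n, ∃ C, ∀ t ∈ s, |mink y (f t)| ≤ C) : ∃ C, 0 ≤ C ∧ ∀ t ∈ s, ‖f t‖ ≤ C := by
  choose C hC using h
  refine ⟨∑ i, |C (Jm (EuclideanSpace.single i 1))|, Finset.sum_nonneg fun i _ => abs_nonneg _,
    fun t ht => ?_⟩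
  conv_lhs => rw [eq_sum_single (f t)]
  refine (norm_sum_le _ _).trans (Finset.sum_le_sum fun i _ => ?_)
  have := hC (Jm (EuclideanSpace.single i 1)) t ht
  rw [mink_Jm, EuclideanSpace.inner_single_left] at this
  rw [norm_smul]
  simp at this ⊢
  exact this.trans (le_abs_self _)

lemma wedge_apply (v w x : E n) : wedge v w x = mink v x • w - mink w x • v := rfl

def IsSol {n : ℕ} (lam b : ℝ) (c d : ℝ → E n) (y : ℝ → E n) : Prop :=
  ∀ t ∈ Set.Ioo (0:ℝ) b, HasDerivAt y
      ((-(lam / t ^ 2)) • (mink (c t) (y t) • d t - mink (d t) (y t) • c t)) t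

lemma isSol_shp {lam b : ℝ} {c d : ℝ → E n} {T : ℝ → E n →L[ℝ] E n}
    (hT : ∀ t ∈ Set.Ioo (0:ℝ) b,
      HasDerivAt T ((lam / t ^ 2) • (T t * wedge (c t) (d t))) t) (y : E n) :
    IsSol lam b c d (fun t => shp (T t) y) := by
  intro t ht
  refine ((hT t ht).shp' y).congr_deriv ?_
  apply mink_ext
  intro z
  rw [mink_shp]
  have : ((lam / t ^ 2) • (T t * wedge (c t) (d t))) z
    = (lam / t ^ 2) • (T t) (mink (c t) z • d t - mink (d t) z • c t) := rfl
  rw [this, mink_smul_right, ← mink_shp]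
  simp only [mink_smul_left, mink_sub_left, mink_sub_right, mink_smul_right]
  rw [mink_comm (c t) (shp _ _), mink_comm (d t) (shp _ _)]
  ring

lemma sol_const {lam b : ℝ} {c d x y : ℝ → E n}
    (hx : IsSol lam b c d x) (hy : IsSol lam b c d y) {s t : ℝ} (hs : s ∈ Ioo 0 b)
    (ht : t ∈ Ioo 0 b) : mink (x s) (y s) = mink (x t) (y t) := by
  have hd : ∀ r ∈ Ioo 0 b, HasDerivAt (fun s => mink (x s) (y s)) 0 r := by
    intro r hr
    refine ((hx r hr).mink' (hy r hr)).congr_deriv ?_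
    simp only [mink_smul_left, mink_sub_left, mink_sub_right, mink_smul_right]
    rw [mink_comm (x r) (c r), mink_comm (x r) (d r)]
    ring
  exact isOpen_Ioo.is_const_of_deriv_eq_zero isPreconnected_Ioo
    (fun r hr => (hd r hr).differentiableAt.differentiableWithinAt)
    (fun r hr => (hd r hr).deriv) hs ht

lemma T_orth {lam b p : ℝ} {c d : ℝ → E n} {T : ℝ → E n →L[ℝ] E n} (hp : p ∈ Ioo 0 b)
    (hTp : T p = 1)
    (hT : ∀ t ∈ Set.Ioo (0:ℝ) b,
      HasDerivAt T ((lam / t ^ 2) • (T t * wedge (c t) (d t))) t) {t : ℝ} (ht : t ∈ Ioo 0 b)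
    (x y : E n) : mink (T t x) (T t y) = mink x y := by
  have h1 : ∀ y, shp (T p) y = y := by
    intro y
    apply mink_ext
    intro z
    rw [mink_shp, hTp]; rfl
  have h2 : ∀ z, T t (shp (T t) z) = z := by
    intro z
    apply mink_ext
    intro w
    rw [mink_comm, ← mink_shp, sol_const (isSol_shp hT w) (isSol_shp hT z) ht hp, h1, h1,
      mink_comm]
  have hsurj : Function.Surjective (T t) := fun z => ⟨_, h2 z⟩
  have hinj : Function.Injective (T t) :=
    (LinearMap.injective_iff_surjective (f := (T t : E n →ₗ[ℝ] E n))).2 hsurj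
  have h3 : shp (T t) (T t x) = x := hinj (h2 _)
  rw [← mink_shp, h3]

lemma T_ch {lam b p : ℝ} {c d : ℝ → E n} {T : ℝ → E n →L[ℝ] E n} (hp : p ∈ Ioo 0 b)
    (hTp : T p = 1)
    (hT : ∀ t ∈ Set.Ioo (0:ℝ) b,
      HasDerivAt T ((lam / t ^ 2) • (T t * wedge (c t) (d t))) t)
    {ch : ℝ → E n} (hch : IsSol lam b c d ch) {t : ℝ} (ht : t ∈ Ioo 0 b) :
    T t (ch t) = ch p := by
  apply mink_ext
  intro z
  rw [mink_comm, ← mink_shp, sol_const (isSol_shp hT z) hch ht hp, mink_shp, hTp, mink_comm]; rfl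


/-! ### the frame at the singularity -/

lemma mvt_pow {F : Type*} [NormedAddCommGroup F] [NormedSpace ℝ F] {f f' : ℝ → F} {t0 K : ℝ}
    (hK : 0 ≤ K) (k : ℕ)
    (hd : ∀ t ∈ Icc 0 t0, HasDerivAt f (f' t) t) (hb : ∀ t ∈ Icc 0 t0, ‖f' t‖ ≤ K * t ^ k)
    {t : ℝ} (ht : t ∈ Icc 0 t0) : ‖f t - f 0‖ ≤ K * t ^ (k + 1) := by
  have h := (convex_Icc (0:ℝ) t).norm_image_sub_le_of_norm_hasDerivWithin_le (f := f) (f' := f')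
    (C := K * t ^ k)
    (fun x hx => (hd x ⟨hx.1, hx.2.trans ht.2⟩).hasDerivWithinAt)
    (fun x hx => (hb x ⟨hx.1, hx.2.trans ht.2⟩).trans (by
      have := hx.1; have := hx.2; gcongr)) (left_mem_Icc.2 ht.1) (right_mem_Icc.2 ht.1)
  rw [sub_zero, Real.norm_of_nonneg ht.1] at h
  rw [pow_succ, ← mul_assoc]; exact h

lemma lim_pow {F : Type*} [NormedAddCommGroup F] [NormedSpace ℝ F] [CompleteSpace F]
    {f f' : ℝ → F} {t0 K : ℝ} (ht0 : 0 < t0)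
    (hK : 0 ≤ K) (k : ℕ)
    (hd : ∀ t ∈ Ioc 0 t0, HasDerivAt f (f' t) t) (hb : ∀ t ∈ Ioc 0 t0, ‖f' t‖ ≤ K * t ^ k) :
    ∃ L, Tendsto f (𝓝[>] 0) (𝓝 L) ∧ ∀ t ∈ Ioc 0 t0, ‖f t - L‖ ≤ K * t ^ (k + 1) := by
  have key : ∀ t ∈ Ioc 0 t0, ∀ s ∈ Ioc 0 t, ‖f t - f s‖ ≤ K * t ^ k * (t - s) := by
    intro t ht s hs
    have h := (convex_Icc s t).norm_image_sub_le_of_norm_hasDerivWithin_le (f := f) (f' := f')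
      (C := K * t ^ k)
      (fun x hx => (hd x ⟨hs.1.trans_le hx.1, hx.2.trans ht.2⟩).hasDerivWithinAt)
      (fun x hx => (hb x ⟨hs.1.trans_le hx.1, hx.2.trans ht.2⟩).trans (by
        have := hs.1.trans_le hx.1; have := hx.2; gcongr)) (left_mem_Icc.2 hs.2)
      (right_mem_Icc.2 hs.2)
    rwa [Real.norm_of_nonneg (sub_nonneg.2 hs.2)] at h
  have key2 : ∀ t ∈ Ioc 0 t0, ∀ s ∈ Ioc 0 t, ‖f t - f s‖ ≤ K * t ^ (k + 1) := by
    intro t ht s hs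
    refine (key t ht s hs).trans ?_
    rw [pow_succ, ← mul_assoc]
    have := ht.1
    have := hs.1
    gcongr
    linarith
  have hlim0 : Tendsto (fun t : ℝ => K * t ^ (k + 1)) (𝓝[>] 0) (𝓝 0) := by
    have : Continuous (fun t : ℝ => K * t ^ (k + 1)) := by fun_prop
    have h := (this.tendsto 0).mono_left (nhdsWithin_le_nhds (s := Ioi 0))
    simpa using h
  have hIoc : ∀ᶠ t in 𝓝[>] (0:ℝ), t ∈ Ioc 0 t0 := Ioc_mem_nhdsGT ht0
  have hc : Cauchy (map f (𝓝[>] (0:ℝ))) := by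
    rw [Metric.cauchy_iff]
    refine ⟨inferInstance, fun ε hε => ?_⟩
    obtain ⟨T, hT1, hT2⟩ := ((hlim0.eventually (gt_mem_nhds (half_pos hε))).and hIoc).exists
    refine ⟨f '' Ioc 0 T, image_mem_map (Ioc_mem_nhdsGT hT2.1), ?_⟩
    rintro _ ⟨x, hx, rfl⟩ _ ⟨y, hy, rfl⟩
    have h1 := key2 T hT2 x hx
    have h2 := key2 T hT2 y hy
    rw [← dist_eq_norm] at h1 h2
    have h3 := dist_triangle_left (f x) (f y) (f T)
    linarith
  obtain ⟨L, hL⟩ := CompleteSpace.complete hc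
  refine ⟨L, hL, fun t ht => ?_⟩
  have hL' : Tendsto f (𝓝[>] 0) (𝓝 L) := hL
  refine le_of_tendsto (tendsto_const_nhds.sub hL').norm ?_
  filter_upwards [Ioc_mem_nhdsGT ht.1] with s hs
  exact key2 t ht s hs

structure Fr {n : ℕ} (b lam t0 K : ℝ) (c d e f : ℝ → E n) (g : E n) : Prop where
  t0pos : 0 < t0
  t01 : t0 ≤ 1
  t0b : t0 < b
  K0 : 0 ≤ K
  lam1 : 1 < 2 * lam
  dc : ∀ t ∈ Icc 0 t0, HasDerivAt c (d t) t
  dd : ∀ t ∈ Icc 0 t0, HasDerivAt d (e t) t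
  de : ∀ t ∈ Icc 0 t0, HasDerivAt e (f t) t
  mcc : ∀ t ∈ Icc 0 t0, mink (c t) (c t) = 0
  mcd : ∀ t ∈ Icc 0 t0, mink (c t) (d t) = 0
  mdd : ∀ t ∈ Icc 0 t0, mink (d t) (d t) = 1
  mce : ∀ t ∈ Icc 0 t0, mink (c t) (e t) = -1
  mde : ∀ t ∈ Icc 0 t0, mink (d t) (e t) = 0
  g0 : g = e 0 + (mink (e 0) (e 0) / 2) • c 0
  bf : ∀ t ∈ Icc 0 t0, ‖f t‖ ≤ K
  bc : ∀ t ∈ Icc 0 t0, ‖c t‖ ≤ K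
  bd : ∀ t ∈ Icc 0 t0, ‖d t‖ ≤ K
  be : ∀ t ∈ Icc 0 t0, ‖e t‖ ≤ K
  Pc : ∀ t ∈ Icc 0 t0, ‖prj (c 0) (d 0) g (c t)‖ ≤ K * t ^ 3
  Pd : ∀ t ∈ Icc 0 t0, ‖prj (c 0) (d 0) g (d t)‖ ≤ K * t ^ 2
  te : ∀ t ∈ Icc 0 t0, ‖e t - e 0‖ ≤ K * t
  td : ∀ t ∈ Icc 0 t0, ‖d t - t • e t - d 0‖ ≤ K * t ^ 2
  tc : ∀ t ∈ Icc 0 t0, ‖c t - t • d t + (t ^ 2 / 2) • e t - c 0‖ ≤ K * t ^ 3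
  nb : ∀ t ∈ Ioc 0 t0, ∀ y : E n, ‖y‖ ≤ (K / t) * (|mink (c t) y / t| + |mink (d t) y| +
    |t * mink (e t) y| + ‖prj (c 0) (d 0) g y‖)

lemma prj_e {c d e : E n} (hcc : mink c c = 0) (hcd : mink c d = 0) (hdd : mink d d = 1)
    (hce : mink c e = -1) (hde : mink d e = 0) :
    prj c d (e + (mink e e / 2) • c) c = 0 ∧ prj c d (e + (mink e e / 2) • c) d = 0 ∧
    prj c d (e + (mink e e / 2) • c) e = 0 := by
  refine ⟨?_, ?_, ?_⟩ <;>
  simp only [prj_apply, mink_add_left, mink_smul_left, hcc, hcd, hdd, hce, hde, mink_comm d c,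
    mink_comm e c, mink_comm e d] <;> module

lemma exists_bound {f : ℝ → E n} {s : ℝ} (hf : ContinuousOn f (Icc 0 s)) :
    ∃ K, 0 ≤ K ∧ ∀ t ∈ Icc 0 s, ‖f t‖ ≤ K := by
  obtain ⟨K, hK⟩ := isCompact_Icc.exists_bound_of_continuousOn hf
  exact ⟨max K 0, le_max_right _ _, fun t ht => (hK t ht).trans (le_max_left _ _)⟩

set_option maxHeartbeats 1000000 in
lemma nb_aux {c d e : ℝ → E n} {t0 K : ℝ} (hK : 0 ≤ K) (ht01 : t0 ≤ 1) (g : E n)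
    (hg : g = e 0 + (mink (e 0) (e 0) / 2) • c 0)
    (te : ∀ t ∈ Icc 0 t0, ‖e t - e 0‖ ≤ K * t)
    (td : ∀ t ∈ Icc 0 t0, ‖d t - t • e t - d 0‖ ≤ K * t ^ 2)
    (tc : ∀ t ∈ Icc 0 t0, ‖c t - t • d t + (t ^ 2 / 2) • e t - c 0‖ ≤ K * t ^ 3) :
    ∃ t1 M, 0 < t1 ∧ 0 ≤ M ∧ ∀ t, 0 < t → t ≤ t0 → t ≤ t1 → ∀ y : E n,
      ‖y‖ ≤ (M / t) * (|mink (c t) y / t| + |mink (d t) y| +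
    |t * mink (e t) y| + ‖prj (c 0) (d 0) g y‖) := by
  obtain ⟨M, hM⟩ : ∃ M, M = 1 + ‖c 0‖ + ‖d 0‖ + ‖g‖ + |mink (e 0) (e 0) / 2| * ‖c 0‖ := ⟨_, rfl⟩
  have hM1 : 1 ≤ M := by rw [hM]; have := norm_nonneg (c 0); have := norm_nonneg (d 0)
                         have := norm_nonneg g; have : 0 ≤ |mink (e 0) (e 0) / 2| * ‖c 0‖ := by positivity
                         linarith
  refine ⟨1 / (6 * M * K + 1), 6 * M, by positivity, by positivity, fun t ht htt ht1 y => ?_⟩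
  have htI : t ∈ Icc 0 t0 := ⟨ht.le, htt⟩
  have htle : t ≤ 1 := htt.trans ht01
  set u := mink (c t) y with hu
  set v := mink (d t) y with hv
  set w := mink (e t) y with hw
  set P := prj (c 0) (d 0) g y with hP
  set S := |u / t| + |v| + |t * w| with hS
  have hS0 : 0 ≤ S := by positivity
  have e1 : |mink (e 0) y| ≤ S / t + K * t * ‖y‖ := by
    have h := (abs_mink_le (e t - e 0) y).trans (mul_le_mul_of_nonneg_right (te t htI) (norm_nonneg y))
    rw [mink_sub_left] at h
    have h2 : |w| ≤ S / t := by
      rw [le_div_iff₀ ht, hS, abs_mul, abs_of_pos ht]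
      have : 0 ≤ |u / t| + |v| := by positivity
      linarith
    have := abs_sub_abs_le_abs_sub (mink (e 0) y) w
    rw [abs_sub_comm] at this
    linarith
  have ht2 : t ^ 2 ≤ t := by nlinarith
  have ht3 : t ^ 3 ≤ t := by nlinarith
  have hSt : S ≤ S / t := by rw [le_div_iff₀ ht]; nlinarith
  have hut : |u| = t * |u / t| := by rw [abs_div, abs_of_pos ht]; field_simp
  have htw : |t * w| = t * |w| := by rw [abs_mul, abs_of_pos ht]
  have e2 : |mink (d 0) y| ≤ S / t + K * t * ‖y‖ := by
    have h := (abs_mink_le (d t - t • e t - d 0) y).trans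
      (mul_le_mul_of_nonneg_right (td t htI) (norm_nonneg y))
    rw [mink_sub_left, mink_sub_left, mink_smul_left] at h
    have h2 : |v - t * w| ≤ S := by
      have := abs_sub v (t * w)
      have : 0 ≤ |u / t| := by positivity
      linarith
    have := abs_sub_abs_le_abs_sub (mink (d 0) y) (v - t * w)
    rw [abs_sub_comm (mink (d 0) y)] at this
    have : K * t ^ 2 * ‖y‖ ≤ K * t * ‖y‖ := by gcongr
    linarith
  have e3 : |mink (c 0) y| ≤ S / t + K * t * ‖y‖ := by
    have h := (abs_mink_le (c t - t • d t + (t ^ 2 / 2) • e t - c 0) y).trans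
      (mul_le_mul_of_nonneg_right (tc t htI) (norm_nonneg y))
    rw [mink_sub_left, mink_add_left, mink_sub_left, mink_smul_left, mink_smul_left] at h
    have h2 : |u - t * v + t ^ 2 / 2 * w| ≤ S := by
      have q1 : |u| ≤ |u / t| := by rw [hut]; nlinarith [abs_nonneg (u/t)]
      have q2 : |t * v| ≤ |v| := by rw [abs_mul, abs_of_pos ht]; nlinarith [abs_nonneg v]
      have q3 : |t ^ 2 / 2 * w| ≤ |t * w| := by
        rw [htw, abs_mul, abs_of_pos (by positivity)]; 
        have := abs_nonneg w
        gcongr; nlinarith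
      have := abs_add_le (u - t * v) (t ^ 2 / 2 * w)
      have := abs_sub u (t * v)
      linarith
    have := abs_sub_abs_le_abs_sub (mink (c 0) y) (u - t * v + t ^ 2 / 2 * w)
    rw [abs_sub_comm] at this
    have : K * t ^ 3 * ‖y‖ ≤ K * t * ‖y‖ := by gcongr
    linarith
  have hy : y = P - mink g y • c 0 + mink (d 0) y • d 0 - mink (c 0) y • g := by
    rw [hP, prj_apply]; module
  have hgy : mink g y = mink (e 0) y + mink (e 0) (e 0) / 2 * mink (c 0) y := by
    rw [hg, mink_add_left, mink_smul_left]
  set k := mink (e 0) (e 0) / 2 with hk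
  have hny : ‖y‖ ≤ ‖P‖ + |mink g y| * ‖c 0‖ + |mink (d 0) y| * ‖d 0‖ + |mink (c 0) y| * ‖g‖ := by
    conv_lhs => rw [hy]
    refine (norm_sub_le _ _).trans ?_
    rw [norm_smul (mink (c 0) y) g, Real.norm_eq_abs (mink (c 0) y)]
    gcongr
    refine (norm_add_le _ _).trans ?_
    rw [norm_smul (mink (d 0) y) (d 0), Real.norm_eq_abs (mink (d 0) y)]
    gcongr
    refine (norm_sub_le _ _).trans ?_
    rw [norm_smul, Real.norm_eq_abs]
  have hgb : |mink g y| ≤ |mink (e 0) y| + |k| * |mink (c 0) y| := by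
    rw [hgy]; refine (abs_add_le _ _).trans ?_; rw [abs_mul]
  set Q := S / t + K * t * ‖y‖ with hQ
  have hQ0 : 0 ≤ Q := by positivity
  have hny2 : ‖y‖ ≤ ‖P‖ + (Q + |k| * Q) * ‖c 0‖ + Q * ‖d 0‖ + Q * ‖g‖ := by
    refine hny.trans ?_
    gcongr
    refine hgb.trans ?_
    gcongr
  have hny3 : ‖y‖ ≤ ‖P‖ + M * Q := by
    refine hny2.trans ?_
    have : ‖P‖ + (Q + |k| * Q) * ‖c 0‖ + Q * ‖d 0‖ + Q * ‖g‖ = ‖P‖ + M * Q - Q := by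
      rw [hM]; ring
    linarith
  have hsm : M * K * t ≤ 1 / 6 := by
    rw [le_div_iff₀ (by positivity)] at ht1
    nlinarith
  have hPt : ‖P‖ ≤ M * (‖P‖ / t) := by
    have : ‖P‖ ≤ ‖P‖ / t := by rw [le_div_iff₀ ht]; nlinarith [norm_nonneg P]
    nlinarith [norm_nonneg P]
  have hfin : ‖y‖ ≤ M * (‖P‖ / t) + M * (S / t) + 1 / 6 * ‖y‖ := by
    have : M * Q = M * (S / t) + M * K * t * ‖y‖ := by rw [hQ]; ring
    have : M * K * t * ‖y‖ ≤ 1 / 6 * ‖y‖ := by gcongr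
    linarith
  have : 6 * M / t * (S + ‖P‖) = 6 * (M * (‖P‖ / t) + M * (S / t)) := by ring
  rw [this]
  have : 0 ≤ ‖y‖ := norm_nonneg y
  linarith

lemma exists_Fr {ε b : ℝ} (hε : 0 < ε) (hb : 0 < b)
    {c : ℝ → E n} (hc : ContDiffOn ℝ (⊤ : ℕ∞) c (Set.Ioo (-ε) b))
    (hcnull : ∀ t ∈ Set.Ioo (-ε) b, mink (c t) (c t) = 0)
    (hcreg : ∀ t ∈ Set.Ioo (-ε) b, mink (deriv c t) (deriv c t) = 1)
    {lam : ℝ} (hlam : 1 < 2 * lam) :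
    ∃ t0 K, Fr b lam t0 K c (deriv c) (deriv (deriv c)) (deriv (deriv (deriv c)))
      (deriv (deriv c) 0 + (mink (deriv (deriv c) 0) (deriv (deriv c) 0) / 2) • c 0) := by
  have ho : IsOpen (Ioo (-ε) b) := isOpen_Ioo
  set d := deriv c with hd
  set e := deriv d with he
  set f := deriv e with hf
  have cd : ContDiffOn ℝ (⊤ : ℕ∞) d (Ioo (-ε) b) := hc.deriv_of_isOpen ho (by simp)
  have ce : ContDiffOn ℝ (⊤ : ℕ∞) e (Ioo (-ε) b) := cd.deriv_of_isOpen ho (by simp)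
  have cf : ContDiffOn ℝ (⊤ : ℕ∞) f (Ioo (-ε) b) := ce.deriv_of_isOpen ho (by simp)
  have D : ∀ {u : ℝ → E n}, ContDiffOn ℝ (⊤ : ℕ∞) u (Ioo (-ε) b) → ∀ t ∈ Ioo (-ε) b,
      HasDerivAt u (deriv u t) t := by
    intro u hu t ht
    exact ((hu.differentiableOn (by simp)).differentiableAt (ho.mem_nhds ht)).hasDerivAt
  have Dc := D hc
  have Dd := D cd
  have De := D ce
  have Z : ∀ {φ : ℝ → ℝ} {φ' : ℝ → ℝ} {k : ℝ}, (∀ t ∈ Ioo (-ε) b, φ t = k) →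
      (∀ t ∈ Ioo (-ε) b, HasDerivAt φ (φ' t) t) → ∀ t ∈ Ioo (-ε) b, φ' t = 0 := by
    intro φ φ' k h1 h2 t ht
    have : φ =ᶠ[𝓝 t] fun _ => k := by
      filter_upwards [ho.mem_nhds ht] with s hs using h1 s hs
    exact (h2 t ht).unique ((hasDerivAt_const t k).congr_of_eventuallyEq this)
  have m1 : ∀ t ∈ Ioo (-ε) b, mink (c t) (d t) = 0 := by
    intro t ht
    have := Z hcnull (fun t ht => (Dc t ht).mink' (Dc t ht)) t ht
    simp only [mink_comm (deriv c t)] at this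
    rw [hd]
    linarith
  have m2 : ∀ t ∈ Ioo (-ε) b, mink (c t) (e t) = -1 := by
    intro t ht
    have := Z m1 (fun t ht => (Dc t ht).mink' (Dd t ht)) t ht
    have h := hcreg t ht
    rw [← hd, ← he] at this
    linarith
  have m3 : ∀ t ∈ Ioo (-ε) b, mink (d t) (e t) = 0 := by
    intro t ht
    have := Z hcreg (fun t ht => (Dd t ht).mink' (Dd t ht)) t ht
    simp only [mink_comm (deriv d t)] at this
    rw [he]
    linarith
  set g := e 0 + (mink (e 0) (e 0) / 2) • c 0 with hg
  have sub : Icc 0 (b / 2) ⊆ Ioo (-ε) b := fun t ht => ⟨by linarith [ht.1], by linarith [ht.2]⟩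
  obtain ⟨Kc, hKc, bc⟩ := exists_bound (hc.continuousOn.mono sub)
  obtain ⟨Kd, hKd, bd⟩ := exists_bound (cd.continuousOn.mono sub)
  obtain ⟨Ke, hKe, be⟩ := exists_bound (ce.continuousOn.mono sub)
  obtain ⟨Kf, hKf, bf⟩ := exists_bound (cf.continuousOn.mono sub)
  have h0 : (0:ℝ) ∈ Ioo (-ε) b := ⟨by linarith, hb⟩
  set P := prj (c 0) (d 0) g with hP
  obtain ⟨P1, P2, P3⟩ := prj_e (hcnull 0 h0) (m1 0 h0) (hcreg 0 h0) (m2 0 h0) (m3 0 h0)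
  rw [← hg, ← hP] at P1 P2 P3
  set K := Kf + ‖P‖ * Kf with hK
  have hK0 : 0 ≤ K := by positivity
  have hKf' : Kf ≤ K := by rw [hK]; have : 0 ≤ ‖P‖ * Kf := by positivity
                           linarith
  have DP : ∀ {u u' : ℝ → E n}, (∀ t ∈ Icc 0 (b/2), HasDerivAt u (u' t) t) → ∀ t ∈ Icc 0 (b/2),
      HasDerivAt (fun t => P (u t)) (P (u' t)) t :=
    fun h t ht => P.hasFDerivAt.comp_hasDerivAt t (h t ht)
  have q0 : ∀ t ∈ Icc 0 (b/2), ‖P (f t)‖ ≤ K * t ^ 0 := by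
    intro t ht
    rw [pow_zero, mul_one]
    have h1 := P.le_opNorm (f t)
    have h2 : ‖P‖ * ‖f t‖ ≤ ‖P‖ * Kf := by gcongr; exact bf t ht
    linarith
  have q1 : ∀ t ∈ Icc 0 (b/2), ‖P (e t)‖ ≤ K * t ^ 1 := by
    intro t ht
    have := mvt_pow hK0 0 (DP fun t ht => De t (sub ht)) q0 ht
    rwa [P3, sub_zero] at this
  have q2 : ∀ t ∈ Icc 0 (b/2), ‖P (d t)‖ ≤ K * t ^ 2 := by
    intro t ht
    have := mvt_pow hK0 1 (DP fun t ht => Dd t (sub ht)) q1 ht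
    rwa [P2, sub_zero] at this
  have q3 : ∀ t ∈ Icc 0 (b/2), ‖P (c t)‖ ≤ K * t ^ 3 := by
    intro t ht
    have := mvt_pow hK0 2 (DP fun t ht => Dc t (sub ht)) q2 ht
    rwa [P1, sub_zero] at this
  have te : ∀ t ∈ Icc 0 (b/2), ‖e t - e 0‖ ≤ K * t := by
    intro t ht
    have := mvt_pow hK0 0 (fun t ht => De t (sub ht)) (fun t ht => by
      rw [pow_zero, mul_one]; exact (bf t ht).trans hKf') ht
    simpa using this
  have td : ∀ t ∈ Icc 0 (b/2), ‖d t - t • e t - d 0‖ ≤ K * t ^ 2 := by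
    intro t ht
    have := mvt_pow (f := fun t => d t - t • e t) (f' := fun t => -(t • f t)) hK0 1
      (fun t ht => ((Dd t (sub ht)).sub ((hasDerivAt_id t).smul (De t (sub ht)))).congr_deriv
        (by simp only [id]; module)) (fun t ht => by
      rw [norm_neg, norm_smul, Real.norm_of_nonneg ht.1, pow_one, mul_comm]
      have := ht.1
      gcongr
      exact (bf t ht).trans hKf') ht
    simpa using this
  have tc : ∀ t ∈ Icc 0 (b/2), ‖c t - t • d t + (t ^ 2 / 2) • e t - c 0‖ ≤ K * t ^ 3 := by
    intro t ht
    have hq : ∀ t : ℝ, HasDerivAt (fun t : ℝ => t ^ 2 / 2) t t := fun t =>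
      (((hasDerivAt_id t).pow 2).div_const 2).congr_deriv (by simp)
    have := mvt_pow (f := fun t => c t - t • d t + (t ^ 2 / 2) • e t)
      (f' := fun t => (t ^ 2 / 2) • f t) hK0 2
      (fun t ht => (((Dc t (sub ht)).sub ((hasDerivAt_id t).smul (Dd t (sub ht)))).add
        ((hq t).smul (De t (sub ht)))).congr_deriv
        (by simp only [id]; module)) (fun t ht => by
      rw [norm_smul, Real.norm_of_nonneg (by positivity), mul_comm]
      have h1 := (bf t ht).trans hKf'
      have : t ^ 2 / 2 ≤ t ^ 2 := by linarith [sq_nonneg t]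
      gcongr) ht
    simpa using this
  set s0 := min (b / 2) 1 with hs0
  have hs0b : s0 ≤ b / 2 := min_le_left _ _
  have hs01 : s0 ≤ 1 := min_le_right _ _
  have hs0p : 0 < s0 := lt_min (half_pos hb) one_pos
  have S2 : Icc 0 s0 ⊆ Icc 0 (b/2) := Icc_subset_Icc_right hs0b
  obtain ⟨t1, M, ht1, hM, hnb⟩ := nb_aux hK0 hs01 g hg (fun t ht => te t (S2 ht))
    (fun t ht => td t (S2 ht)) (fun t ht => tc t (S2 ht))
  set t0 := min s0 t1 with ht0
  have ht0s : t0 ≤ s0 := min_le_left _ _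
  have ht01 : t0 ≤ t1 := min_le_right _ _
  have S3 : Icc 0 t0 ⊆ Icc 0 (b/2) := Icc_subset_Icc_right (ht0s.trans hs0b)
  have S4 : Icc 0 t0 ⊆ Ioo (-ε) b := S3.trans sub
  have B : K ≤ K + M + Kc + Kd + Ke := by linarith
  refine ⟨t0, K + M + Kc + Kd + Ke, lt_min hs0p ht1, ht0s.trans hs01,
    by linarith, by positivity, hlam,
    fun t ht => Dc t (S4 ht), fun t ht => Dd t (S4 ht), fun t ht => De t (S4 ht),
    fun t ht => hcnull t (S4 ht), fun t ht => m1 t (S4 ht), fun t ht => hcreg t (S4 ht),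
    fun t ht => m2 t (S4 ht), fun t ht => m3 t (S4 ht), hg,
    fun t ht => ?_, fun t ht => ?_, fun t ht => ?_, fun t ht => ?_,
    fun t ht => ?_, fun t ht => ?_, fun t ht => ?_, fun t ht => ?_, fun t ht => ?_,
    fun t ht y => ?_⟩
  · have := bf t (S3 ht); linarith
  · have := bc t (S3 ht); linarith
  · have := bd t (S3 ht); linarith
  · have := be t (S3 ht); linarith
  · refine (q3 t (S3 ht)).trans ?_
    have := ht.1
    gcongr
  · refine (q2 t (S3 ht)).trans ?_
    have := ht.1
    gcongr
  · refine (te t (S3 ht)).trans ?_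
    have := ht.1
    gcongr
  · refine (td t (S3 ht)).trans ?_
    have := ht.1
    gcongr
  · refine (tc t (S3 ht)).trans ?_
    have := ht.1
    gcongr
  · refine (hnb t ht.1 (ht.2.trans ht0s) (ht.2.trans ht01) y).trans ?_
    have := ht.1
    gcongr
    linarith


/-! ### the scalar system -/

def sU {n : ℕ} (c y : ℝ → E n) (t : ℝ) : ℝ := mink (c t) (y t) / t
def sV {n : ℕ} (d y : ℝ → E n) (t : ℝ) : ℝ := mink (d t) (y t)
def sW {n : ℕ} (e y : ℝ → E n) (t : ℝ) : ℝ := t * mink (e t) (y t)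
def sA {n : ℕ} (lam : ℝ) (c d e y : ℝ → E n) (t : ℝ) : ℝ :=
  lam * sU c y t - sV d y t + sW e y t
def sH {n : ℕ} (lam : ℝ) (c e y : ℝ → E n) (t : ℝ) : ℝ := sW e y t - lam * sU c y t
def sQ {n : ℕ} (lam : ℝ) (c d e y : ℝ → E n) (t : ℝ) : ℝ :=
  sV d y t - sA lam c d e y t / (2 * lam - 1)
def sR {n : ℕ} (f y : ℝ → E n) (t : ℝ) : ℝ := t * mink (f t) (y t)

section sys
variable {b lam t0 K : ℝ} {c d e f : ℝ → E n} {g : E n} {y : ℝ → E n}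

lemma Fr.Ib (F : Fr b lam t0 K c d e f g) {t : ℝ} (ht : t ∈ Ioc 0 t0) : t ∈ Ioo 0 b :=
  ⟨ht.1, ht.2.trans_lt F.t0b⟩
lemma Fr.Ic (_F : Fr b lam t0 K c d e f g) {t : ℝ} (ht : t ∈ Ioc 0 t0) : t ∈ Icc 0 t0 :=
  ⟨ht.1.le, ht.2⟩

lemma Fr.derU (F : Fr b lam t0 K c d e f g) (hy : IsSol lam b c d y) {t : ℝ} (ht : t ∈ Ioc 0 t0) :
    HasDerivAt (sU c y) ((sV d y t - sU c y t) / t) t := by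
  have h0 : t ≠ 0 := ht.1.ne'
  refine (((F.dc t (F.Ic ht)).mink' (hy t (F.Ib ht))).div (hasDerivAt_id t) h0).congr_deriv ?_
  simp only [mink_smul_right, mink_sub_right, F.mcc t (F.Ic ht), F.mcd t (F.Ic ht), sU, sV, id]
  field_simp
  ring

lemma Fr.derV (F : Fr b lam t0 K c d e f g) (hy : IsSol lam b c d y) {t : ℝ} (ht : t ∈ Ioc 0 t0) :
    HasDerivAt (sV d y) ((sW e y t - lam * sU c y t) / t) t := by
  have h0 : t ≠ 0 := ht.1.ne'
  refine ((F.dd t (F.Ic ht)).mink' (hy t (F.Ib ht))).congr_deriv ?_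
  simp only [mink_smul_right, mink_sub_right, F.mdd t (F.Ic ht), mink_comm (d t) (c t),
    F.mcd t (F.Ic ht), sU, sW]
  field_simp
  ring

lemma Fr.derW (F : Fr b lam t0 K c d e f g) (hy : IsSol lam b c d y) {t : ℝ} (ht : t ∈ Ioc 0 t0) :
    HasDerivAt (sW e y) ((sW e y t - lam * sV d y t) / t + sR f y t) t := by
  have h0 : t ≠ 0 := ht.1.ne'
  refine ((hasDerivAt_id t).mul ((F.de t (F.Ic ht)).mink' (hy t (F.Ib ht)))).congr_deriv ?_
  simp only [mink_smul_right, mink_sub_right, mink_comm (e t) (c t), mink_comm (e t) (d t),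
    F.mce t (F.Ic ht), F.mde t (F.Ic ht), sV, sW, sR, id]
  field_simp
  ring

lemma Fr.derA (F : Fr b lam t0 K c d e f g) (hy : IsSol lam b c d y) {t : ℝ} (ht : t ∈ Ioc 0 t0) :
    HasDerivAt (sA lam c d e y) (sR f y t) t := by
  have h0 : t ≠ 0 := ht.1.ne'
  refine ((((F.derU hy ht).const_mul lam).sub (F.derV hy ht)).add (F.derW hy ht)).congr_deriv ?_
  field_simp
  ring

lemma Fr.derH (F : Fr b lam t0 K c d e f g) (hy : IsSol lam b c d y) {t : ℝ} (ht : t ∈ Ioc 0 t0) :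
    HasDerivAt (sH lam c e y) (-((2 * lam - 1) * sQ lam c d e y t) / t + sR f y t) t := by
  have h0 : t ≠ 0 := ht.1.ne'
  have h1 : 2 * lam - 1 ≠ 0 := by have := F.lam1; intro h; linarith
  refine ((F.derW hy ht).sub ((F.derU hy ht).const_mul lam)).congr_deriv ?_
  have h2 : (2 * lam - 1) * sQ lam c d e y t = (2 * lam - 1) * sV d y t - sA lam c d e y t := by
    rw [sQ, mul_sub, mul_div_cancel₀ _ h1]
  rw [h2, sA]
  field_simp
  ring

lemma Fr.derQ (F : Fr b lam t0 K c d e f g) (hy : IsSol lam b c d y) {t : ℝ} (ht : t ∈ Ioc 0 t0) :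
    HasDerivAt (sQ lam c d e y) (sH lam c e y t / t - sR f y t / (2 * lam - 1)) t := by
  exact (F.derV hy ht).sub ((F.derA hy ht).div_const _)

lemma Fr.derM (F : Fr b lam t0 K c d e f g) (hy : IsSol lam b c d y) {t : ℝ} (ht : t ∈ Ioc 0 t0) :
    ∃ m', HasDerivAt (fun t => prj (c 0) (d 0) g (y t)) m' t ∧
      ‖m'‖ ≤ lam * K * t * (|sU c y t| + |sV d y t|) := by
  refine ⟨_, (prj (c 0) (d 0) g).hasFDerivAt.comp_hasDerivAt t (hy t (F.Ib ht)), ?_⟩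
  have h0 : 0 < t := ht.1
  have hl : 0 < lam := by linarith [F.lam1]
  have hu : mink (c t) (y t) = t * sU c y t := by unfold sU; field_simp
  have hv : mink (d t) (y t) = sV d y t := rfl
  have h1 := F.Pc t (F.Ic ht)
  have h2 := F.Pd t (F.Ic ht)
  rw [map_smul, map_sub, map_smul, map_smul, hu, hv, norm_smul, norm_neg,
    Real.norm_of_nonneg (by positivity)]
  have h3 : ‖(t * sU c y t) • prj (c 0) (d 0) g (d t) - sV d y t • prj (c 0) (d 0) g (c t)‖ ≤
      (t * |sU c y t|) * (K * t ^ 2) + |sV d y t| * (K * t ^ 3) := by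
    refine (norm_sub_le _ _).trans ?_
    rw [norm_smul, norm_smul, Real.norm_eq_abs, Real.norm_eq_abs, abs_mul, abs_of_pos h0]
    gcongr
  calc lam / t ^ 2 * _ ≤ lam / t ^ 2 * ((t * |sU c y t|) * (K * t ^ 2) + |sV d y t| * (K * t ^ 3)) := by
        gcongr
    _ = _ := by field_simp

lemma Fr.nby (F : Fr b lam t0 K c d e f g) {t : ℝ} (ht : t ∈ Ioc 0 t0) :
    ‖y t‖ ≤ (K / t) * (|sU c y t| + |sV d y t| + |sW e y t| + ‖prj (c 0) (d 0) g (y t)‖) :=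
  F.nb t ht (y t)

lemma Fr.rb (F : Fr b lam t0 K c d e f g) {t : ℝ} (ht : t ∈ Ioc 0 t0) :
    |sR f y t| ≤ K * K * (|sU c y t| + |sV d y t| + |sW e y t| + ‖prj (c 0) (d 0) g (y t)‖) := by
  have h0 : 0 < t := ht.1
  have hK := F.K0
  unfold sR
  rw [abs_mul, abs_of_pos h0]
  have h1 := (abs_mink_le (f t) (y t)).trans (mul_le_mul (F.bf t (F.Ic ht)) (F.nby ht)
    (norm_nonneg _) F.K0)
  calc _ ≤ t * _ := mul_le_mul_of_nonneg_left h1 h0.le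
    _ = _ := by field_simp

lemma Fr.bddX (F : Fr b lam t0 K c d e f g) (hy : IsSol lam b c d y) :
    ∃ C, 0 ≤ C ∧ ∀ t ∈ Ioc 0 t0,
      |sU c y t| + |sV d y t| + |sW e y t| + ‖prj (c 0) (d 0) g (y t)‖ ≤ C := by
  have hK := F.K0
  have hl : 0 < lam := by linarith [F.lam1]
  obtain ⟨w2, hw2⟩ : ∃ w2, w2 = 2 * lam - 1 := ⟨_, rfl⟩
  have hw : 0 < w2 := by linarith [F.lam1]
  obtain ⟨om, hom⟩ : ∃ om, om = Real.sqrt w2 := ⟨_, rfl⟩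
  have hompos : 0 < om := by rw [hom]; exact Real.sqrt_pos.2 hw
  have homsq : om ^ 2 = w2 := by rw [hom]; exact Real.sq_sqrt hw.le
  set A := sA lam c d e y with hA
  set Q := sQ lam c d e y with hQ
  set H := sH lam c e y with hH
  set m := fun t => prj (c 0) (d 0) g (y t) with hm
  set En : ℝ → ℝ := fun t => A t ^ 2 + w2 * Q t ^ 2 + H t ^ 2 + ‖m t‖ ^ 2 with hEn
  set S : ℝ → ℝ := fun t => |sU c y t| + |sV d y t| + |sW e y t| + ‖m t‖ with hS
  have hEn0 : ∀ t, 0 ≤ En t := fun t => by positivity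
  obtain ⟨kV, hkV⟩ : ∃ k, k = 1 / om + 1 / w2 := ⟨_, rfl⟩
  have hkV0 : 0 < kV := by rw [hkV]; positivity
  obtain ⟨C1, hC1⟩ : ∃ C, C = (2 + kV) / (2 * lam) + kV + (2 + kV) / 2 + 1 := ⟨_, rfl⟩
  have hC10 : 0 < C1 := by rw [hC1]; positivity
  have bA : ∀ t, |A t| ≤ √(En t) := fun t => Real.abs_le_sqrt (by
    simp only [hEn]
    have : 0 ≤ w2 * Q t ^ 2 := by positivity
    nlinarith [sq_nonneg (H t), sq_nonneg (‖m t‖)])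
  have bH : ∀ t, |H t| ≤ √(En t) := fun t => Real.abs_le_sqrt (by
    simp only [hEn]
    have : 0 ≤ w2 * Q t ^ 2 := by positivity
    nlinarith [sq_nonneg (A t), sq_nonneg (‖m t‖)])
  have bm : ∀ t, ‖m t‖ ≤ √(En t) := fun t => Real.le_sqrt_of_sq_le (by
    simp only [hEn]
    have : 0 ≤ w2 * Q t ^ 2 := by positivity
    nlinarith [sq_nonneg (A t), sq_nonneg (H t)])
  have bQ : ∀ t, |Q t| ≤ 1 / om * √(En t) := fun t => by
    have : |om * Q t| ≤ √(En t) := Real.abs_le_sqrt (by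
      simp only [hEn]
      rw [mul_pow, homsq]
      nlinarith [sq_nonneg (A t), sq_nonneg (‖m t‖), sq_nonneg (H t)])
    rw [abs_mul, abs_of_pos hompos] at this
    rw [one_div, ← div_eq_inv_mul, le_div_iff₀ hompos]
    linarith
  have bS : ∀ t, S t ≤ C1 * √(En t) := fun t => by
    have eV : sV d y t = Q t + A t / w2 := by simp only [hQ, sQ, hA, hw2]; ring
    have eW : sW e y t = (A t + sV d y t + H t) / 2 := by simp only [hH, sH, hA, sA]; ring
    have eU : sU c y t = (A t + sV d y t - H t) / (2 * lam) := by
      simp only [hH, sH, hA, sA]; field_simp; ring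
    have hr := Real.sqrt_nonneg (En t)
    have v1 : |sV d y t| ≤ kV * √(En t) := by
      rw [eV]
      refine (abs_add_le _ _).trans ?_
      rw [abs_div, abs_of_pos hw, hkV, add_mul]
      have := bA t
      have h2 : |A t| / w2 ≤ 1 / w2 * √(En t) := by
        rw [one_div, ← div_eq_inv_mul]; gcongr
      linarith [bQ t]
    have w1 : |sW e y t| ≤ (2 + kV) / 2 * √(En t) := by
      rw [eW, abs_div, abs_two]
      have h1 := abs_add_le (A t + sV d y t) (H t)
      have h2 := abs_add_le (A t) (sV d y t)
      have := bA t
      have := bH t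
      linarith
    have u1 : |sU c y t| ≤ (2 + kV) / (2 * lam) * √(En t) := by
      rw [eU, abs_div, abs_of_pos (by positivity : 0 < 2 * lam), div_mul_eq_mul_div]
      have h1 := abs_sub (A t + sV d y t) (H t)
      have h2 := abs_add_le (A t) (sV d y t)
      have := bA t
      have := bH t
      gcongr
      linarith
    simp only [hS, hC1]
    have := bm t
    linarith
  choose! m' hm' hm'b using fun t (ht : t ∈ Ioc 0 t0) => F.derM hy ht
  obtain ⟨C2, hC2⟩ : ∃ C, C = 2 * (K * K * C1) * (2 + 1 / om) + 2 * (lam * K * C1) := ⟨_, rfl⟩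
  have hC20 : 0 ≤ C2 := by rw [hC2]; positivity
  have dE : ∀ t ∈ Ioc 0 t0, ∃ E', HasDerivAt En E' t ∧ - (C2 * En t) ≤ E' := by
    intro t ht
    have dA := F.derA hy ht
    have dH := F.derH hy ht
    have dQ := F.derQ hy ht
    have dm := hm' t ht
    rw [← hA] at dA
    rw [← hH, ← hw2, ← hQ] at dH
    rw [← hH, ← hw2, ← hQ] at dQ
    have h0 : t ≠ 0 := ht.1.ne'
    refine ⟨2 * sR f y t * (A t - Q t + H t) + 2 * inner ℝ (m t) (m' t), ?_, ?_⟩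
    · refine ((((dA.pow 2).add ((dQ.pow 2).const_mul w2)).add (dH.pow 2)).add
        (dm.norm_sq)).congr_deriv ?_
      simp only [hm]
      field_simp
      ring
    · have hr := Real.sqrt_nonneg (En t)
      have hE : √(En t) * √(En t) = En t := Real.mul_self_sqrt (hEn0 t)
      have r1 : |sR f y t| ≤ K * K * C1 * √(En t) := by
        refine (F.rb ht).trans ?_
        have := bS t
        simp only [hS, hm] at this
        rw [mul_assoc (K * K)]
        gcongr
      have r2 : |A t - Q t + H t| ≤ (2 + 1 / om) * √(En t) := by
        have h1 := abs_add_le (A t - Q t) (H t)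
        have h2 := abs_sub (A t) (Q t)
        have := bA t
        have := bH t
        have := bQ t
        linarith
      have r3 : ‖m' t‖ ≤ lam * K * C1 * √(En t) := by
        refine (hm'b t ht).trans ?_
        have h1 := bS t
        have h2 : |sU c y t| + |sV d y t| ≤ S t := by
          simp only [hS]
          have := abs_nonneg (sW e y t)
          have := norm_nonneg (m t)
          linarith
        have ht1 : t ≤ 1 := ht.2.trans F.t01
        have := ht.1
        calc lam * K * t * (|sU c y t| + |sV d y t|) ≤ lam * K * 1 * (C1 * √(En t)) := by
              gcongr
              linarith
          _ = _ := by ring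
      have r4 : |sR f y t * (A t - Q t + H t)| ≤ K * K * C1 * (2 + 1 / om) * En t := by
        rw [abs_mul]
        calc _ ≤ (K * K * C1 * √(En t)) * ((2 + 1 / om) * √(En t)) := by gcongr
          _ = K * K * C1 * (2 + 1 / om) * (√(En t) * √(En t)) := by ring
          _ = _ := by rw [hE]
      have r5 : |inner ℝ (m t) (m' t)| ≤ lam * K * C1 * En t := by
        refine (abs_real_inner_le_norm _ _).trans ?_
        calc _ ≤ √(En t) * (lam * K * C1 * √(En t)) := by
              have := bm t
              gcongr
          _ = lam * K * C1 * (√(En t) * √(En t)) := by ring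
          _ = _ := by rw [hE]
      have r6 := (abs_le.1 r4).1
      have r7 := (abs_le.1 r5).1
      have : C2 * En t = 2 * (K * K * C1 * (2 + 1 / om) * En t) + 2 * (lam * K * C1 * En t) := by
        rw [hC2]; ring
      rw [this]
      linarith
  choose! E' hE' hE'b using dE
  have mono : MonotoneOn (fun t => En t * Real.exp (C2 * t)) (Ioc 0 t0) := by
    have hd : ∀ t ∈ Ioc 0 t0, HasDerivAt (fun t => En t * Real.exp (C2 * t))
        ((E' t + C2 * En t) * Real.exp (C2 * t)) t := by
      intro t ht
      refine ((hE' t ht).mul (((hasDerivAt_id t).const_mul C2).exp)).congr_deriv ?_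
      simp only [id]
      ring
    refine monotoneOn_of_deriv_nonneg (convex_Ioc 0 t0)
      (fun t ht => (hd t ht).continuousAt.continuousWithinAt)
      (fun t ht => (hd t (interior_subset ht)).differentiableAt.differentiableWithinAt)
      (fun t ht => ?_)
    rw [(hd t (interior_subset ht)).deriv]
    have := hE'b t (interior_subset ht)
    apply mul_nonneg (by linarith) (Real.exp_pos _).le
  refine ⟨C1 * √(En t0 * Real.exp (C2 * t0)), by positivity, fun t ht => (bS t).trans ?_⟩
  have h1 := mono ht ⟨F.t0pos, le_rfl⟩ ht.2
  have h2 : En t ≤ En t * Real.exp (C2 * t) := by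
    have : 1 ≤ Real.exp (C2 * t) := Real.one_le_exp (mul_nonneg hC20 ht.1.le)
    nlinarith [hEn0 t]
  gcongr
  exact h2.trans h1

end sys


/-! ### use of the hypothesis on the limit circle -/

section key
variable {b lam t0 K : ℝ} {c d e f : ℝ → E n} {g : E n} {y : ℝ → E n}

lemma Fr.sA_eq {t : ℝ} :
    sA lam c d e y t = mink ((lam / t) • c t - d t + t • e t) (y t) := by
  simp only [sA, sU, sV, sW, mink_add_left, mink_sub_left, mink_smul_left]
  ring

lemma Fr.key (F : Fr b lam t0 K c d e f g) {p : ℝ} (hp : p ∈ Ioo 0 b)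
    {T : ℝ → E n →L[ℝ] E n} (hTp : T p = 1)
    (hT : ∀ t ∈ Set.Ioo (0:ℝ) b,
      HasDerivAt T ((lam / t ^ 2) • (T t * wedge (c t) (d t))) t)
    {ch : ℝ → E n} (hne : ch p ≠ 0) (hch : IsSol lam b c d ch)
    (haccum : projAccum b (fun t => (T t) (c t)) (ch p)) :
    ∃ α C : ℝ, α ≠ 0 ∧ 0 ≤ C ∧ Tendsto (sA lam c d e ch) (𝓝[>] 0) (𝓝 α) ∧ ∀ t ∈ Ioc 0 t0,
      |sU c ch t| ≤ C ∧ |sV d ch t| ≤ C ∧ |sW e ch t| ≤ C ∧ |sR f ch t| ≤ C ∧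
      ‖ch t‖ ≤ C / t ∧ ‖prj (c 0) (d 0) g (ch t)‖ ≤ C * t ^ 2 := by
  have hK := F.K0
  have hl : 0 < lam := by linarith [F.lam1]
  -- boundedness of the transported frame
  obtain ⟨B1, hB10, hB1⟩ := bdd_of_mink (s := Ioc 0 t0) (f := fun t => (1 / t) • T t (c t)) (by
    intro y0
    obtain ⟨C, hC0, hC⟩ := F.bddX (isSol_shp hT y0)
    refine ⟨C, fun t ht => ?_⟩
    have h1 : mink y0 ((1 / t) • T t (c t)) = sU c (fun t => shp (T t) y0) t := by
      rw [mink_smul_right, ← mink_shp, sU, mink_comm]; ring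
    rw [h1]
    have := hC t ht
    have := abs_nonneg (sV d (fun t => shp (T t) y0) t)
    have := abs_nonneg (sW e (fun t => shp (T t) y0) t)
    have := norm_nonneg (prj (c 0) (d 0) g (shp (T t) y0))
    linarith)
  obtain ⟨B2, hB20, hB2⟩ := bdd_of_mink (s := Ioc 0 t0)
    (f := fun t => T t ((lam / t) • c t - d t + t • e t)) (by
    intro y0
    obtain ⟨C, hC0, hC⟩ := F.bddX (isSol_shp hT y0)
    refine ⟨(lam + 1) * C, fun t ht => ?_⟩
    have h1 : mink y0 (T t ((lam / t) • c t - d t + t • e t))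
        = sA lam c d e (fun t => shp (T t) y0) t := by
      rw [← mink_shp, Fr.sA_eq, mink_comm]
    rw [h1, sA]
    set yy := fun t => shp (T t) y0
    have h2 := hC t ht
    have n1 := abs_nonneg (sU c yy t)
    have n2 := abs_nonneg (sV d yy t)
    have n3 := abs_nonneg (sW e yy t)
    have n4 := norm_nonneg (prj (c 0) (d 0) g (yy t))
    have n5 := abs_add_le (lam * sU c yy t - sV d yy t) (sW e yy t)
    have n6 := abs_sub (lam * sU c yy t) (sV d yy t)
    rw [abs_mul, abs_of_pos hl] at n6
    have : |sU c yy t| ≤ C := by linarith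
    have : lam * |sU c yy t| ≤ lam * C := by gcongr
    linarith)
  have hB3 : ∀ v : E n, ∃ B, 0 ≤ B ∧ ∀ t ∈ Ioc 0 t0, ‖T t (prj (c 0) (d 0) g v)‖ ≤ B := by
    intro v
    refine bdd_of_mink (s := Ioc 0 t0) (f := fun t => T t (prj (c 0) (d 0) g v)) ?_
    intro y0
    obtain ⟨C, hC0, hC⟩ := F.bddX (isSol_shp hT y0)
    refine ⟨C * ‖v‖, fun t ht => ?_⟩
    have h2 := hC t ht
    rw [← mink_shp, ← prj_symm]
    refine (abs_mink_le _ _).trans ?_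
    have := abs_nonneg (sU c (fun t => shp (T t) y0) t)
    have := abs_nonneg (sV d (fun t => shp (T t) y0) t)
    have := abs_nonneg (sW e (fun t => shp (T t) y0) t)
    gcongr
    linarith
  obtain ⟨C, hC0, hC⟩ := F.bddX hch
  have hR : ∀ t ∈ Ioc 0 t0, |sR f ch t| ≤ K * K * C := fun t ht =>
    (F.rb ht).trans (by have := hC t ht; gcongr)
  obtain ⟨α, hα, -⟩ := lim_pow F.t0pos (f := sA lam c d e ch) (f' := sR f ch) (K := K * K * C)
    (by positivity) 0 (fun t ht => F.derA hch ht) (fun t ht => by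
      rw [pow_zero, mul_one]; exact hR t ht)
  choose! m' hm' hm'b using fun t (ht : t ∈ Ioc 0 t0) => F.derM hch ht
  obtain ⟨M, hM, hMb⟩ := lim_pow F.t0pos (f := fun t => prj (c 0) (d 0) g (ch t)) (f' := m')
    (K := lam * K * C) (by positivity) 1 hm' (fun t ht => by
      refine (hm'b t ht).trans ?_
      have h2 := hC t ht
      have := abs_nonneg (sW e ch t)
      have := norm_nonneg (prj (c 0) (d 0) g (ch t))
      have h4 : |sU c ch t| + |sV d ch t| ≤ C := by linarith
      have := ht.1
      calc _ ≤ lam * K * t * C := by gcongr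
        _ = _ := by ring)
  obtain ⟨ts, rs, hts, hts0, hlim⟩ := haccum
  have hts' : Tendsto ts atTop (𝓝[>] 0) :=
    tendsto_nhdsWithin_iff.2 ⟨hts0, Eventually.of_forall fun i => (hts i).1⟩
  have hev : ∀ᶠ i in atTop, ts i ∈ Ioc 0 t0 := hts'.eventually (Ioc_mem_nhdsGT F.t0pos)
  have hdiff : Tendsto (fun i => ‖rs i • (T (ts i)) (c (ts i)) - ch p‖) atTop (𝓝 0) := by
    have := (hlim.sub_const (ch p)).norm
    simpa using this
  -- `r t → -α`
  have hrt : Tendsto (fun i => rs i * ts i) atTop (𝓝 (-α)) := by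
    have h1 : Tendsto (fun i => mink (rs i • (T (ts i)) (c (ts i)) - ch p)
        (T (ts i) ((lam / ts i) • c (ts i) - d (ts i) + ts i • e (ts i)))) atTop (𝓝 0) := by
      have h2 := hdiff.mul_const B2
      rw [zero_mul] at h2
      refine squeeze_zero_norm' ?_ h2
      filter_upwards [hev] with i hi
      refine (abs_mink_le _ _).trans ?_
      have := hB2 _ hi
      gcongr
    have h3 := (hα.comp hts').neg.sub h1
    rw [sub_zero] at h3
    refine h3.congr' ?_
    filter_upwards [hev] with i hi
    have hi' := F.Ic hi
    have hi0 : ts i ≠ 0 := hi.1.ne'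
    simp only [Function.comp]
    rw [mink_sub_left, mink_smul_left, T_orth hp hTp hT (hts i), ← T_ch hp hTp hT hch (hts i),
      T_orth hp hTp hT (hts i), mink_comm (ch _), ← Fr.sA_eq]
    simp only [mink_add_right, mink_sub_right, mink_smul_right, F.mcc _ hi', F.mcd _ hi',
      F.mce _ hi']
    ring
  have hαne : α ≠ 0 := by
    intro h0
    apply hne
    have h1 : Tendsto (fun i => rs i • (T (ts i)) (c (ts i))) atTop (𝓝 0) := by
      have h2 := hrt.norm.mul_const B1
      rw [h0, neg_zero, norm_zero, zero_mul] at h2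
      refine squeeze_zero_norm' ?_ h2
      filter_upwards [hev] with i hi
      have hi0 : ts i ≠ 0 := hi.1.ne'
      have h3 : rs i • (T (ts i)) (c (ts i)) = (rs i * ts i) • ((1 / ts i) • (T (ts i)) (c (ts i))) := by
        rw [smul_smul]; congr 1; field_simp
      rw [h3, norm_smul]
      have := hB1 _ hi
      gcongr
    exact tendsto_nhds_unique hlim h1
  have hM0 : M = 0 := by
    apply mink_nondeg
    intro v
    obtain ⟨B3, hB30, hB3⟩ := hB3 v
    have l1 : Tendsto (fun i => mink (prj (c 0) (d 0) g (ch (ts i))) v) atTop (𝓝 (mink M v)) :=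
      tendsto_mink (hM.comp hts') tendsto_const_nhds
    refine tendsto_nhds_unique l1 ?_
    have l2 : Tendsto (fun i => ‖rs i • (T (ts i)) (c (ts i)) - ch p‖ * B3
        + |rs i * ts i| * (K * ts i ^ 2 * ‖v‖)) atTop (𝓝 (0 * B3 + |-α| * (K * 0 ^ 2 * ‖v‖))) :=
      (hdiff.mul_const B3).add (hrt.abs.mul (((hts0.pow 2).const_mul K).mul_const _))
    simp only [ne_eq, OfNat.ofNat_ne_zero, not_false_eq_true, zero_pow, mul_zero, zero_mul,
      add_zero] at l2
    refine squeeze_zero_norm' ?_ l2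
    filter_upwards [hev] with i hi
    have hi' := F.Ic hi
    have hi0 := hi.1
    have e1 : mink (prj (c 0) (d 0) g (ch (ts i))) v
        = - mink (rs i • (T (ts i)) (c (ts i)) - ch p) (T (ts i) (prj (c 0) (d 0) g v))
          + rs i * mink (prj (c 0) (d 0) g (c (ts i))) v := by
      rw [mink_sub_left, mink_smul_left, T_orth hp hTp hT (hts i), ← T_ch hp hTp hT hch (hts i),
        T_orth hp hTp hT (hts i), prj_symm, prj_symm]
      ring
    rw [e1, Real.norm_eq_abs]
    refine (abs_add_le _ _).trans ?_
    rw [abs_neg]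
    refine add_le_add ((abs_mink_le _ _).trans ?_) ?_
    · have := hB3 _ hi
      gcongr
    · rw [abs_mul, abs_mul, abs_of_pos hi0]
      have h1 := (abs_mink_le (prj (c 0) (d 0) g (c (ts i))) v).trans
        (mul_le_mul_of_nonneg_right (F.Pc _ hi') (norm_nonneg v))
      calc _ ≤ |rs i| * (K * ts i ^ 3 * ‖v‖) := by gcongr
        _ = _ := by ring
  refine ⟨α, C + K * K * C + K * C + lam * K * C, hαne, by positivity, hα, fun t ht => ?_⟩
  have h2 := hC t ht
  have p1 : 0 ≤ K * K * C := by positivity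
  have p2 : 0 ≤ K * C := by positivity
  have p3 : 0 ≤ lam * K * C := by positivity
  have n1 := abs_nonneg (sU c ch t)
  have n2 := abs_nonneg (sV d ch t)
  have n3 := abs_nonneg (sW e ch t)
  have n4 := norm_nonneg (prj (c 0) (d 0) g (ch t))
  have ht0 := ht.1
  refine ⟨by linarith, by linarith, by linarith, by linarith [hR t ht], ?_, ?_⟩
  · refine (F.nby ht).trans ?_
    calc _ ≤ K / t * C := by gcongr
      _ = K * C / t := by ring
      _ ≤ _ := by gcongr; linarith
  · have := hMb t ht
    rw [hM0, sub_zero] at this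
    refine this.trans ?_
    norm_num
    gcongr
    linarith

end key


/-! ### oscillation -/

lemma phase_seq {om : ℝ} (hom : 0 < om) {η z : ℂ} (hη : η ≠ 0) (hz : ‖z‖ = ‖η‖) :
    ∃ s : ℕ → ℝ, (∀ k, 0 < s k) ∧ Tendsto s atTop (𝓝 0) ∧
      ∀ k, η * Complex.exp (((-(om * Real.log (s k)) : ℝ) : ℂ) * Complex.I) = z := by
  set θ := Complex.arg (z / η) with hθ
  have h1 : Complex.exp ((θ : ℂ) * Complex.I) = z / η := by
    have := Complex.norm_mul_exp_arg_mul_I (z / η)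
    rwa [norm_div, hz, div_self (norm_ne_zero_iff.2 hη), Complex.ofReal_one, one_mul] at this
  refine ⟨fun k => Real.exp (-(θ + 2 * Real.pi * k) / om), fun k => Real.exp_pos _, ?_, ?_⟩
  · refine Real.tendsto_exp_atBot.comp ?_
    refine Tendsto.atBot_div_const hom ?_
    refine tendsto_neg_atTop_atBot.comp ?_
    refine tendsto_atTop_add_const_left _ _ ?_
    exact tendsto_natCast_atTop_atTop.const_mul_atTop (by positivity)
  · intro k
    rw [Real.log_exp]
    have h2 : -(om * (-(θ + 2 * Real.pi * k) / om)) = θ + 2 * Real.pi * k := by field_simp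
    rw [h2]
    have h3 : (((θ + 2 * Real.pi * k : ℝ)) : ℂ) * Complex.I
        = (θ : ℂ) * Complex.I + k * (2 * Real.pi * Complex.I) := by push_cast; ring
    rw [h3, Complex.exp_add, Complex.exp_nat_mul_two_pi_mul_I, mul_one, h1]
    field_simp

def vlin (om α : ℝ) (z : ℂ) : ℝ := (z.re / om + α / om ^ 2 - α - z.im) / 2
def ulin (om α lam : ℝ) (z : ℂ) : ℝ :=
  (α + (z.re / om + α / om ^ 2) - z.im) / (2 * lam) - (z.re / om + α / om ^ 2)
    + (α + (z.re / om + α / om ^ 2) + z.im) / 4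

lemma rot_re_im (om α σ : ℝ) :
    (((-(α / om) : ℝ) + (-α : ℝ) * Complex.I : ℂ) * Complex.exp (((-(om * σ) : ℝ) : ℂ) * Complex.I)).re
      = -(α / om) * Real.cos (om * σ) - α * Real.sin (om * σ) ∧
    (((-(α / om) : ℝ) + (-α : ℝ) * Complex.I : ℂ) * Complex.exp (((-(om * σ) : ℝ) : ℂ) * Complex.I)).im
      = -α * Real.cos (om * σ) + α / om * Real.sin (om * σ) := by
  rw [Complex.exp_mul_I, ← Complex.ofReal_cos, ← Complex.ofReal_sin, Real.cos_neg, Real.sin_neg]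
  constructor <;> simp [-Complex.ofReal_cos, -Complex.ofReal_sin, -Complex.ofReal_div] <;> ring

lemma model {om α lam : ℝ} (hom : 0 < om) (hα : α ≠ 0) (hlam : 2 * lam = om ^ 2 + 1)
    (ζ : ℂ) (hζ : ζ = ((-(α / om) : ℝ) + (-α : ℝ) * Complex.I : ℂ)) :
    ∃ τ δ, 0 < τ ∧ 0 < δ ∧
      α * vlin om α (ζ * Complex.exp (((-(om * (-τ)) : ℝ) : ℂ) * Complex.I)) > 0 ∧
      α * vlin om α (ζ * Complex.exp (((-(om * τ) : ℝ) : ℂ) * Complex.I)) < 0 ∧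
      ∀ σ ∈ Icc (-τ) τ,
        δ ≤ α * ulin om α lam (ζ * Complex.exp (((-(om * σ) : ℝ) : ℂ) * Complex.I)) := by
  have hl : 0 < lam := by nlinarith
  have hα2 : 0 < α ^ 2 := by positivity
  set φ : ℝ → ℝ := fun σ => α * vlin om α (ζ * Complex.exp (((-(om * σ) : ℝ) : ℂ) * Complex.I))
    with hφ
  set ψ : ℝ → ℝ := fun σ => α * ulin om α lam (ζ * Complex.exp (((-(om * σ) : ℝ) : ℂ) * Complex.I))
    with hψ
  have eφ : φ = fun σ => α * (((-(α / om) * Real.cos (om * σ) - α * Real.sin (om * σ)) / om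
      + α / om ^ 2 - α - (-α * Real.cos (om * σ) + α / om * Real.sin (om * σ))) / 2) := by
    funext σ
    simp only [hφ, vlin, hζ, (rot_re_im om α σ).1, (rot_re_im om α σ).2]
  have cψ : Continuous ψ := by
    simp only [hψ, ulin]
    fun_prop
  have hψ0 : ψ 0 = α ^ 2 / lam := by
    simp only [hψ, ulin, hζ, (rot_re_im om α 0).1, (rot_re_im om α 0).2]
    simp only [mul_zero, Real.cos_zero, Real.sin_zero]
    field_simp
    ring
  have hφ0 : φ 0 = 0 := by
    rw [eφ]
    simp only [mul_zero, Real.cos_zero, Real.sin_zero]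
    field_simp
    ring
  have dφ : HasDerivAt φ (-α ^ 2) 0 := by
    rw [eφ]
    have hx : HasDerivAt (fun σ : ℝ => om * σ) om 0 := by
      simpa using (hasDerivAt_id (0:ℝ)).const_mul om
    have hc := hx.cos
    have hs := hx.sin
    refine ((((((((hc.const_mul (-(α / om))).sub (hs.const_mul α)).div_const om).add_const
      (α / om ^ 2)).sub_const α).sub ((hc.const_mul (-α)).add (hs.const_mul (α / om)))).div_const
      2).const_mul α).congr_deriv ?_
    simp only [mul_zero, Real.cos_zero, Real.sin_zero]
    field_simp
    ring
  have h1 := hasDerivAt_iff_tendsto_slope.1 dφ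
  have h2 : ∀ᶠ σ in 𝓝[≠] (0:ℝ), slope φ 0 σ < 0 := h1.eventually (gt_mem_nhds (by linarith))
  have h3 : ∀ᶠ σ in 𝓝 (0:ℝ), α ^ 2 / lam / 2 < ψ σ := by
    refine (cψ.tendsto 0).eventually (lt_mem_nhds ?_)
    rw [hψ0]
    have : 0 < α ^ 2 / lam := by positivity
    linarith
  rw [eventually_nhdsWithin_iff, Metric.eventually_nhds_iff] at h2
  obtain ⟨r1, hr1, h2⟩ := h2
  obtain ⟨r2, hr2, h3⟩ := Metric.eventually_nhds_iff.1 h3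
  set τ := min r1 r2 / 2 with hτ
  have hτ0 : 0 < τ := by positivity
  have hτ1 : τ < r1 := by have := min_le_left r1 r2; have : 0 < min r1 r2 := by positivity
                          linarith
  have hτ2 : τ < r2 := by have := min_le_right r1 r2; have : 0 < min r1 r2 := by positivity
                          linarith
  refine ⟨τ, α ^ 2 / lam / 2, hτ0, by positivity, ?_, ?_, ?_⟩
  · have := h2 (y := -τ) (by simp [abs_of_pos hτ0, hτ1]) (by simp [hτ0.ne'])
    rw [slope_def_field, hφ0, sub_zero, sub_zero, div_neg, neg_lt_zero] at this
    have h5 := (div_pos_iff_of_pos_right hτ0).1 this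
    exact h5
  · have := h2 (y := τ) (by simp [abs_of_pos hτ0, hτ1]) (by simp [hτ0.ne'])
    rw [slope_def_field, hφ0, sub_zero, sub_zero] at this
    by_contra h
    rw [not_lt] at h
    have h5 := div_nonneg h hτ0.le
    linarith
  · intro σ hσ
    refine (h3 (y := σ) ?_).le
    rw [dist_zero_right, Real.norm_eq_abs]
    exact (abs_le.2 hσ).trans_lt hτ2

lemma osc {om α lam t0 : ℝ} (hom : 0 < om) (hα : α ≠ 0) (hlam : 2 * lam = om ^ 2 + 1) (ht0 : 0 < t0)
    {η : ℂ} (hη : ‖η‖ ^ 2 = (om ^ 2 + 1) * α ^ 2 / om ^ 2) {V0 U0 : ℝ → ℝ}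
    (hc : ContinuousOn V0 (Ioc 0 t0))
    (hV : Tendsto (fun t => V0 t - vlin om α
      (η * Complex.exp (((-(om * Real.log t) : ℝ) : ℂ) * Complex.I))) (𝓝[>] 0) (𝓝 0))
    (hU : Tendsto (fun t => U0 t - ulin om α lam
      (η * Complex.exp (((-(om * Real.log t) : ℝ) : ℂ) * Complex.I))) (𝓝[>] 0) (𝓝 0)) :
    ∃ δ > 0, ∀ ε > 0, ∃ t ∈ Ioc 0 t0, t < ε ∧ V0 t = 0 ∧ δ ≤ |U0 t| := by
  obtain ⟨ζ, hζ⟩ : ∃ ζ : ℂ, ζ = ((-(α / om) : ℝ) + (-α : ℝ) * Complex.I : ℂ) := ⟨_, rfl⟩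
  have hnorm : ‖ζ‖ = ‖η‖ := by
    rw [← sq_eq_sq₀ (norm_nonneg _) (norm_nonneg _), hη, ← Complex.normSq_eq_norm_sq, hζ,
      Complex.normSq_add_mul_I]
    field_simp
    ring
  have hηne : η ≠ 0 := by
    intro h
    rw [h] at hη
    have : 0 < (om ^ 2 + 1) * α ^ 2 / om ^ 2 := by positivity
    simp at hη
    rw [← hη] at this
    exact lt_irrefl _ this
  obtain ⟨τ, δ, hτ, hδ, m1, m2, m3⟩ := model hom hα hlam ζ hζ
  obtain ⟨s, hs, hs0, hsη⟩ := phase_seq hom hηne hnorm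
  have hαp : 0 < |α| := abs_pos.2 hα
  have rot : ∀ k t, 0 < t → η * Complex.exp (((-(om * Real.log t) : ℝ) : ℂ) * Complex.I)
      = ζ * Complex.exp (((-(om * (Real.log t - Real.log (s k))) : ℝ) : ℂ) * Complex.I) := by
    intro k t ht
    rw [← hsη k, mul_assoc, ← Complex.exp_add]
    congr 2
    push_cast
    ring
  refine ⟨δ / (2 * |α|), by positivity, fun ε hε => ?_⟩
  have lim : ∀ σ : ℝ, Tendsto (fun k => s k * Real.exp σ) atTop (𝓝[>] 0) := fun σ =>
    tendsto_nhdsWithin_iff.2 ⟨by simpa using hs0.mul_const (Real.exp σ),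
      Eventually.of_forall fun k => mul_pos (hs k) (Real.exp_pos _)⟩
  have hlog : ∀ k σ, Real.log (s k * Real.exp σ) - Real.log (s k) = σ := fun k σ => by
    rw [Real.log_mul (hs k).ne' (Real.exp_pos _).ne', Real.log_exp]; ring
  have limV : ∀ σ : ℝ, Tendsto (fun k => α * V0 (s k * Real.exp σ)) atTop
      (𝓝 (α * vlin om α (ζ * Complex.exp (((-(om * σ) : ℝ) : ℂ) * Complex.I)))) := by
    intro σ
    have h := ((hV.comp (lim σ)).add_const
      (vlin om α (ζ * Complex.exp (((-(om * σ) : ℝ) : ℂ) * Complex.I)))).const_mul α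
    rw [zero_add] at h
    refine h.congr fun k => ?_
    simp only [Function.comp]
    rw [rot k _ (mul_pos (hs k) (Real.exp_pos _)), hlog]
    ring
  have hUs : ∀ᶠ t in 𝓝[>] (0:ℝ), |U0 t - ulin om α lam
      (η * Complex.exp (((-(om * Real.log t) : ℝ) : ℂ) * Complex.I))| < δ / (2 * |α|) := by
    have h := hU.abs
    rw [abs_zero] at h
    exact h.eventually (gt_mem_nhds (by positivity))
  obtain ⟨r, hr, hUr⟩ := mem_nhdsGT_iff_exists_Ioo_subset.1 hUs
  have hr : 0 < r := hr
  have e1 := (limV (-τ)).eventually (lt_mem_nhds m1)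
  have e2 := (limV τ).eventually (gt_mem_nhds m2)
  have e3 : ∀ᶠ k in atTop, s k * Real.exp τ < min (min t0 ε) r :=
    ((tendsto_nhdsWithin_iff.1 (lim τ)).1).eventually (gt_mem_nhds (by positivity))
  obtain ⟨k, k1, k2, k3⟩ := (e1.and (e2.and e3)).exists
  have k4 : s k * Real.exp τ < t0 := k3.trans_le ((min_le_left _ _).trans (min_le_left _ _))
  have k5 : s k * Real.exp τ < ε := k3.trans_le ((min_le_left _ _).trans (min_le_right _ _))
  have k6 : s k * Real.exp τ < r := k3.trans_le (min_le_right _ _)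
  have hp : 0 < s k * Real.exp (-τ) := mul_pos (hs k) (Real.exp_pos _)
  have hle : s k * Real.exp (-τ) ≤ s k * Real.exp τ := by
    have := hs k
    gcongr
    linarith
  have hcont : ContinuousOn (fun t => α * V0 t) (Icc (s k * Real.exp (-τ)) (s k * Real.exp τ)) :=
    (hc.mono fun t ht => ⟨hp.trans_le ht.1, ht.2.trans k4.le⟩).const_mul α |>.congr fun t _ => rfl
  obtain ⟨t, ht, htV⟩ := intermediate_value_Icc' hle hcont ⟨k2.le, k1.le⟩
  have htp : 0 < t := hp.trans_le ht.1
  refine ⟨t, ⟨htp, ht.2.trans k4.le⟩, ht.2.trans_lt k5, ?_, ?_⟩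
  · exact (mul_eq_zero.1 htV).resolve_left hα
  · have h1 : |U0 t - ulin om α lam
      (η * Complex.exp (((-(om * Real.log t) : ℝ) : ℂ) * Complex.I))| < δ / (2 * |α|) :=
      hUr ⟨htp, ht.2.trans_lt k6⟩
    rw [rot k t htp] at h1
    set σ := Real.log t - Real.log (s k) with hσ
    have hσm : σ ∈ Icc (-τ) τ := by
      have a1 := Real.log_le_log hp ht.1
      have a2 := Real.log_le_log htp ht.2
      rw [Real.log_mul (hs k).ne' (Real.exp_pos _).ne', Real.log_exp] at a1 a2
      constructor <;> linarith
    have h2 := m3 σ hσm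
    set u := ulin om α lam (ζ * Complex.exp (((-(om * σ) : ℝ) : ℂ) * Complex.I))
    have h3 : δ / |α| ≤ |u| := by
      rw [div_le_iff₀ hαp, ← abs_mul, mul_comm]
      exact h2.trans (le_abs_self _)
    have h4 := abs_sub_abs_le_abs_sub u (U0 t)
    rw [abs_sub_comm u] at h4
    have h5 : δ / |α| = δ / (2 * |α|) + δ / (2 * |α|) := by field_simp; norm_num
    linarith


/-! ### asymptotics -/

lemma Ioc_ev {t0 : ℝ} (ht0 : 0 < t0) {p : ℝ → Prop} (h : ∀ t ∈ Ioc 0 t0, p t) :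
    ∀ᶠ t in 𝓝[>] (0:ℝ), p t := by
  filter_upwards [Ioc_mem_nhdsGT ht0] with t ht using h t ht

lemma lin_zero {t0 C : ℝ} (ht0 : 0 < t0) {h : ℝ → ℝ} (hh : ∀ t ∈ Ioc 0 t0, |h t| ≤ C * t) :
    Tendsto h (𝓝[>] 0) (𝓝 0) := by
  have h1 : Tendsto (fun t : ℝ => C * t) (𝓝[>] 0) (𝓝 0) := by
    have : Tendsto (fun t : ℝ => C * t) (𝓝 0) (𝓝 (C * 0)) := tendsto_id.const_mul C
    rw [mul_zero] at this
    exact this.mono_left nhdsWithin_le_nhds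
  exact squeeze_zero_norm' (Ioc_ev ht0 hh) h1

lemma bmul {t0 C : ℝ} (ht0 : 0 < t0) {B h : ℝ → ℝ} (hB : ∀ t ∈ Ioc 0 t0, |B t| ≤ C)
    (hh : Tendsto h (𝓝[>] 0) (𝓝 0)) : Tendsto (fun t => B t * h t) (𝓝[>] 0) (𝓝 0) := by
  have h1 : Tendsto (fun t => C * |h t|) (𝓝[>] 0) (𝓝 0) := by
    simpa using (hh.abs).const_mul C
  refine squeeze_zero_norm' (Ioc_ev ht0 fun t ht => ?_) h1
  rw [Real.norm_eq_abs, abs_mul]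
  exact mul_le_mul_of_nonneg_right (hB t ht) (abs_nonneg _)

def Bnd {n : ℕ} (t0 C : ℝ) (c d e f : ℝ → E n) (g : E n) (ch : ℝ → E n) : Prop :=
  ∀ t ∈ Ioc 0 t0,
      |sU c ch t| ≤ C ∧ |sV d ch t| ≤ C ∧ |sW e ch t| ≤ C ∧ |sR f ch t| ≤ C ∧
      ‖ch t‖ ≤ C / t ∧ ‖prj (c 0) (d 0) g (ch t)‖ ≤ C * t ^ 2

section fin
variable {b lam t0 K C : ℝ} {c d e f : ℝ → E n} {g : E n} {y : ℝ → E n}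

lemma Fr.z (F : Fr b lam t0 K c d e f g) : (0:ℝ) ∈ Icc 0 t0 := ⟨le_rfl, F.t0pos.le⟩

lemma Fr.gf (F : Fr b lam t0 K c d e f g) :
    mink (c 0) g = -1 ∧ mink (d 0) g = 0 ∧ mink g g = 0 := by
  have z := F.z
  rw [F.g0]
  simp only [mink_add_right, mink_add_left, mink_smul_right, mink_smul_left, F.mcc 0 z, F.mce 0 z,
    F.mde 0 z, mink_comm (e 0) (c 0), mink_comm (d 0) (c 0), F.mcd 0 z]
  refine ⟨by ring, by ring, by ring⟩

lemma Fr.prj_sq (F : Fr b lam t0 K c d e f g) (x : E n) :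
    mink (prj (c 0) (d 0) g x) (prj (c 0) (d 0) g x)
      = mink x x - mink (d 0) x ^ 2 + 2 * mink (c 0) x * mink g x := by
  have z := F.z
  obtain ⟨g1, g2, g3⟩ := F.gf
  simp only [prj_apply, mink_add_right, mink_add_left, mink_sub_left, mink_sub_right,
    mink_smul_right, mink_smul_left, F.mcc 0 z, F.mcd 0 z, F.mdd 0 z, g1, g2, g3,
    mink_comm g (c 0), mink_comm g (d 0), mink_comm (d 0) (c 0), mink_comm x g, mink_comm x (c 0),
    mink_comm x (d 0)]
  ring

lemma Fr.clV (F : Fr b lam t0 K c d e f g) (B : Bnd t0 C c d e f g y) :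
    Tendsto (fun t => mink (d 0) (y t) - (sV d y t - sW e y t)) (𝓝[>] 0) (𝓝 0) := by
  refine lin_zero (C := K * C) F.t0pos fun t ht => ?_
  have h0 : 0 < t := ht.1
  have hK := F.K0
  obtain ⟨-, -, -, -, h5, -⟩ := B t ht
  have e1 : mink (d 0) (y t) - (sV d y t - sW e y t) = -mink (d t - t • e t - d 0) (y t) := by
    simp only [sV, sW, mink_sub_left, mink_smul_left]; ring
  rw [e1, abs_neg]
  calc _ ≤ _ := abs_mink_le _ _
    _ ≤ (K * t ^ 2) * (C / t) := mul_le_mul (F.td t (F.Ic ht)) h5 (norm_nonneg _) (by positivity)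
    _ = K * C * t := by field_simp

lemma Fr.clU (F : Fr b lam t0 K c d e f g) (B : Bnd t0 C c d e f g y) :
    Tendsto (fun t => mink (c 0) (y t) / t - (sU c y t - sV d y t + sW e y t / 2)) (𝓝[>] 0) (𝓝 0) := by
  refine lin_zero (C := K * C) F.t0pos fun t ht => ?_
  have h0 : 0 < t := ht.1
  have hK := F.K0
  obtain ⟨-, -, -, -, h5, -⟩ := B t ht
  have e1 : mink (c 0) (y t) / t - (sU c y t - sV d y t + sW e y t / 2)
      = -(mink (c t - t • d t + (t ^ 2 / 2) • e t - c 0) (y t) / t) := by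
    simp only [sU, sV, sW, mink_sub_left, mink_add_left, mink_smul_left]
    field_simp
    ring
  rw [e1, abs_neg, abs_div, abs_of_pos h0, div_le_iff₀ h0]
  calc _ ≤ _ := abs_mink_le _ _
    _ ≤ (K * t ^ 3) * (C / t) := mul_le_mul (F.tc t (F.Ic ht)) h5 (norm_nonneg _) (by positivity)
    _ = K * C * t * t := by field_simp

lemma Fr.bu0 (F : Fr b lam t0 K c d e f g) (B : Bnd t0 C c d e f g y) :
    Tendsto (fun t => mink (c 0) (y t)) (𝓝[>] 0) (𝓝 0) := by
  have h1 : Tendsto (fun t => (sU c y t - sV d y t + sW e y t / 2) * t) (𝓝[>] 0) (𝓝 0) := by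
    refine bmul (C := 3 * C) F.t0pos (fun t ht => ?_) (tendsto_id.mono_left nhdsWithin_le_nhds)
    obtain ⟨h1, h2, h3, -⟩ := B t ht
    have := abs_nonneg (sW e y t)
    rw [abs_le] at h1 h2 h3 ⊢
    constructor <;> linarith
  have h2 := (F.clU B).mul (tendsto_id.mono_left nhdsWithin_le_nhds : Tendsto (id : ℝ → ℝ) (𝓝[>] 0) (𝓝 0))
  have h3 := h2.add h1
  simp only [mul_zero, add_zero] at h3
  refine h3.congr' (Ioc_ev F.t0pos fun t ht => ?_)
  have h0 : t ≠ 0 := ht.1.ne'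
  simp only [id]
  field_simp
  ring

lemma Fr.clW (F : Fr b lam t0 K c d e f g) (B : Bnd t0 C c d e f g y) :
    Tendsto (fun t => t * mink g (y t) - sW e y t) (𝓝[>] 0) (𝓝 0) := by
  have h1 : Tendsto (fun t => t * mink (e 0) (y t) - sW e y t) (𝓝[>] 0) (𝓝 0) := by
    refine lin_zero (C := K * C) F.t0pos fun t ht => ?_
    have h0 : 0 < t := ht.1
    have hK := F.K0
    obtain ⟨-, -, -, -, h5, -⟩ := B t ht
    have e1 : t * mink (e 0) (y t) - sW e y t = -(t * mink (e t - e 0) (y t)) := by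
      simp only [sW, mink_sub_left]; ring
    rw [e1, abs_neg, abs_mul, abs_of_pos h0]
    calc _ ≤ t * (‖e t - e 0‖ * ‖y t‖) := by gcongr; exact abs_mink_le _ _
      _ ≤ t * ((K * t) * (C / t)) := by
        refine mul_le_mul_of_nonneg_left ?_ h0.le
        exact mul_le_mul (F.te t (F.Ic ht)) h5 (norm_nonneg _) (by positivity)
      _ = K * C * t := by field_simp
  have h2 := (((tendsto_id.mono_left nhdsWithin_le_nhds : Tendsto (id : ℝ → ℝ) (𝓝[>] 0) (𝓝 0)).mul
    (F.bu0 B)).const_mul (mink (e 0) (e 0) / 2)).add h1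
  simp only [mul_zero, add_zero] at h2
  refine h2.congr fun t => ?_
  rw [F.g0]
  simp only [mink_add_left, mink_smul_left, id]
  ring

lemma Fr.null0 (F : Fr b lam t0 K c d e f g) (B : Bnd t0 C c d e f g y)
    (hn : ∀ t ∈ Ioo 0 b, mink (y t) (y t) = 0) :
    Tendsto (fun t => sV d y t ^ 2 - 2 * sU c y t * sW e y t) (𝓝[>] 0) (𝓝 0) := by
  have hP : Tendsto (fun t => mink (d 0) (y t) ^ 2 - 2 * (mink (c 0) (y t) / t) * (t * mink g (y t)))
      (𝓝[>] 0) (𝓝 0) := by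
    refine lin_zero (C := C * C) F.t0pos fun t ht => ?_
    have h0 : 0 < t := ht.1
    obtain ⟨-, -, -, -, -, h6⟩ := B t ht
    have h := F.prj_sq (y t)
    rw [hn t (F.Ib ht)] at h
    have e1 : mink (d 0) (y t) ^ 2 - 2 * (mink (c 0) (y t) / t) * (t * mink g (y t))
      = -mink (prj (c 0) (d 0) g (y t)) (prj (c 0) (d 0) g (y t)) := by
      rw [h]; field_simp; ring
    rw [e1, abs_neg]
    have ht1 : t ≤ 1 := ht.2.trans F.t01
    calc _ ≤ _ := abs_mink_le _ _
      _ ≤ (C * t ^ 2) * (C * t ^ 2) :=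
        mul_le_mul h6 h6 (norm_nonneg _) ((norm_nonneg _).trans h6)
      _ = C * C * t * t ^ 3 := by ring
      _ ≤ C * C * t * 1 := by
        refine mul_le_mul_of_nonneg_left (pow_le_one₀ h0.le ht1) ?_
        exact mul_nonneg (mul_self_nonneg C) h0.le
      _ = _ := mul_one _
  have hV := F.clV B
  have hU := F.clU B
  have hW := F.clW B
  have a1 : Tendsto (fun t => (sV d y t - sW e y t) *
      (mink (d 0) (y t) - (sV d y t - sW e y t))) (𝓝[>] 0) (𝓝 0) := by
    refine bmul (C := 2 * C) F.t0pos (fun t ht => ?_) hV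
    obtain ⟨h1, h2, h3, -⟩ := B t ht
    rw [abs_le] at h1 h2 h3 ⊢
    constructor <;> linarith
  have a2 : Tendsto (fun t => (sU c y t - sV d y t + sW e y t / 2) *
      (t * mink g (y t) - sW e y t)) (𝓝[>] 0) (𝓝 0) := by
    refine bmul (C := 3 * C) F.t0pos (fun t ht => ?_) hW
    obtain ⟨h1, h2, h3, -⟩ := B t ht
    have := abs_nonneg (sW e y t)
    rw [abs_le] at h1 h2 h3 ⊢
    constructor <;> linarith
  have a3 : Tendsto (fun t => sW e y t *
      (mink (c 0) (y t) / t - (sU c y t - sV d y t + sW e y t / 2))) (𝓝[>] 0) (𝓝 0) :=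
    bmul F.t0pos (fun t ht => (B t ht).2.2.1) hU
  have h := ((((hP.sub (hV.mul hV)).sub (a1.const_mul 2)).add ((hU.mul hW).const_mul 2)).add
    (a2.const_mul 2)).add (a3.const_mul 2)
  simp only [mul_zero, add_zero, sub_zero] at h
  refine h.congr fun t => ?_
  ring

/-- the oscillating phase -/
lemma Fr.eta (F : Fr b lam t0 K c d e f g) (B : Bnd t0 C c d e f g y) (hy : IsSol lam b c d y)
    (hn : ∀ t ∈ Ioo 0 b, mink (y t) (y t) = 0) {om α : ℝ} (hom : 0 < om)
    (hlam : 2 * lam = om ^ 2 + 1) (hA : Tendsto (sA lam c d e y) (𝓝[>] 0) (𝓝 α)) :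
    ∃ η : ℂ, ‖η‖ ^ 2 = (om ^ 2 + 1) * α ^ 2 / om ^ 2 ∧
      Tendsto (fun t => om * sQ lam c d e y t -
        (η * Complex.exp (((-(om * Real.log t) : ℝ) : ℂ) * Complex.I)).re) (𝓝[>] 0) (𝓝 0) ∧
      Tendsto (fun t => sH lam c e y t -
        (η * Complex.exp (((-(om * Real.log t) : ℝ) : ℂ) * Complex.I)).im) (𝓝[>] 0) (𝓝 0) := by
  set ζ : ℝ → ℂ := fun t => ((om * sQ lam c d e y t : ℝ) : ℂ) + ((sH lam c e y t : ℝ) : ℂ) * Complex.I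
    with hζ
  set κ : ℂ := ((-(1 / om) : ℝ) : ℂ) + Complex.I with hκ
  have hlam' : 2 * lam - 1 = om ^ 2 := by linarith
  have hd : ∀ t ∈ Ioc 0 t0, HasDerivAt
      (fun t => ζ t * Complex.exp (((om * Real.log t : ℝ) : ℂ) * Complex.I))
      (((sR f y t : ℝ) : ℂ) * κ * Complex.exp (((om * Real.log t : ℝ) : ℂ) * Complex.I)) t := by
    intro t ht
    have h0 : t ≠ 0 := ht.1.ne'
    have h0c : (t : ℂ) ≠ 0 := by exact_mod_cast h0
    have hoc : (om : ℂ) ≠ 0 := by exact_mod_cast hom.ne'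
    have q1 := ((F.derQ hy ht).const_mul om).ofReal_comp
    have q2 := ((F.derH hy ht).ofReal_comp).mul_const Complex.I
    have q3 := ((((Real.hasDerivAt_log h0).const_mul om).ofReal_comp).mul_const Complex.I).cexp
    refine ((q1.add q2).mul q3).congr_deriv ?_
    rw [hlam']
    simp only [hκ]
    push_cast
    have hI := Complex.I_sq
    simp only [Pi.add_apply]
    field_simp
    push_cast
    ring_nf
    simp only [hI]
    ring
  have hbd : ∀ t ∈ Ioc 0 t0, ‖((sR f y t : ℝ) : ℂ) * κ *
      Complex.exp (((om * Real.log t : ℝ) : ℂ) * Complex.I)‖ ≤ (C * ‖κ‖) * t ^ 0 := by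
    intro t ht
    rw [norm_mul, Complex.norm_exp_ofReal_mul_I, norm_mul, Complex.norm_real, pow_zero]
    have := (B t ht).2.2.2.1
    rw [Real.norm_eq_abs]
    simp only [mul_one]
    gcongr
  have hC : 0 ≤ C := (abs_nonneg _).trans (B t0 ⟨F.t0pos, le_rfl⟩).1
  obtain ⟨η, hη, -⟩ := lim_pow F.t0pos (by positivity) 0 hd hbd
  have hdiff : Tendsto (fun t => ζ t -
      η * Complex.exp (((-(om * Real.log t) : ℝ) : ℂ) * Complex.I)) (𝓝[>] 0) (𝓝 0) := by
    rw [tendsto_zero_iff_norm_tendsto_zero]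
    have h := (tendsto_iff_norm_sub_tendsto_zero).1 hη
    refine h.congr fun t => ?_
    have e1 : ζ t * Complex.exp (((om * Real.log t : ℝ) : ℂ) * Complex.I) - η
        = (ζ t - η * Complex.exp (((-(om * Real.log t) : ℝ) : ℂ) * Complex.I)) *
          Complex.exp (((om * Real.log t : ℝ) : ℂ) * Complex.I) := by
      rw [sub_mul, mul_assoc η, ← Complex.exp_add]
      simp
    rw [e1, norm_mul, Complex.norm_exp_ofReal_mul_I, mul_one]
  refine ⟨η, ?_, ?_, ?_⟩
  · have h1 : Tendsto (fun t => ‖ζ t * Complex.exp (((om * Real.log t : ℝ) : ℂ) * Complex.I)‖ ^ 2)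
        (𝓝[>] 0) (𝓝 (‖η‖ ^ 2)) := (hη.norm).pow 2
    have h2 : Tendsto (fun t => 2 * lam * (sV d y t ^ 2 - 2 * sU c y t * sW e y t) +
        2 * lam * sA lam c d e y t ^ 2 / om ^ 2) (𝓝[>] 0) (𝓝 (2 * lam * 0 + 2 * lam * α ^ 2 / om ^ 2)) :=
      ((F.null0 B hn).const_mul _).add (((hA.pow 2).const_mul _).div_const _)
    have h3 := tendsto_nhds_unique h1 (h2.congr fun t => ?_)
    · rw [h3, mul_zero, zero_add, hlam]
    · rw [norm_mul, Complex.norm_exp_ofReal_mul_I, mul_one, ← Complex.normSq_eq_norm_sq, hζ]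
      simp only
      rw [Complex.normSq_add_mul_I]
      have : lam = (om ^ 2 + 1) / 2 := by linarith
      simp only [sQ, hlam', sH, sA]
      subst this
      field_simp
      ring
  · have h := (Complex.continuous_re.tendsto 0).comp hdiff
    simp only [Complex.zero_re] at h
    refine h.congr fun t => ?_
    simp [hζ]
  · have h := (Complex.continuous_im.tendsto 0).comp hdiff
    simp only [Complex.zero_im] at h
    refine h.congr fun t => ?_
    simp [hζ]

end fin


section fin2
variable {b lam t0 K C : ℝ} {c d e f : ℝ → E n} {g : E n} {y : ℝ → E n}

lemma prj_decomp (c d g x : E n) :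
    x = prj c d g x - mink g x • c + mink d x • d - mink c x • g := by
  rw [prj_apply]; abel

lemma Fr.accG (F : Fr b lam t0 K c d e f g) (B : Bnd t0 C c d e f g y) (hy : IsSol lam b c d y)
    (hn : ∀ t ∈ Ioo 0 b, mink (y t) (y t) = 0) {α : ℝ} (hα : α ≠ 0)
    (hA : Tendsto (sA lam c d e y) (𝓝[>] 0) (𝓝 α)) : projAccum b y g := by
  have hC : 0 ≤ C := (abs_nonneg _).trans (B t0 ⟨F.t0pos, le_rfl⟩).1
  have hl := F.lam1
  have hom : 0 < Real.sqrt (2 * lam - 1) := Real.sqrt_pos.2 (by linarith)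
  have hlam : 2 * lam = Real.sqrt (2 * lam - 1) ^ 2 + 1 := by
    rw [Real.sq_sqrt (by linarith)]; ring
  obtain ⟨om, hom0⟩ : ∃ om, om = Real.sqrt (2 * lam - 1) := ⟨_, rfl⟩
  rw [← hom0] at hom hlam
  have hlam' : 2 * lam - 1 = om ^ 2 := by linarith
  have hlne : lam ≠ 0 := by intro h; rw [h] at hl; linarith
  obtain ⟨η, hη, hQ, hH⟩ := F.eta B hy hn hom hlam hA
  have hA0 : Tendsto (fun t => sA lam c d e y t - α) (𝓝[>] 0) (𝓝 0) := by
    simpa using hA.sub_const α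
  have hcont : ContinuousOn (fun t => mink (d 0) (y t)) (Ioc 0 t0) := fun t ht => by
    have := (hasDerivAt_const t (d 0)).mink' (hy t (F.Ib ht))
    exact this.continuousAt.continuousWithinAt
  obtain ⟨δ, hδ, H⟩ := osc (V0 := fun t => mink (d 0) (y t)) (U0 := fun t => mink (c 0) (y t) / t)
    hom hα hlam F.t0pos hη hcont (by
      have h := (F.clV B).add ((((hQ.div_const om).add (hA0.div_const (om ^ 2))).sub hA0).sub hH
        |>.div_const 2)
      simp only [zero_div, add_zero, sub_zero] at h
      refine h.congr fun t => ?_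
      simp only [vlin, sQ, sH, hlam']
      have e1 : sW e y t = sA lam c d e y t - lam * sU c y t + sV d y t := by simp only [sA]; ring
      rw [e1]
      field_simp
      ring) (by
      have hVV := (hQ.div_const om).add (hA0.div_const (om ^ 2))
      have h := (F.clU B).add (((((hA0.add hVV).sub hH).div_const (2 * lam)).sub hVV).add
        (((hA0.add hVV).add hH).div_const 4))
      simp only [zero_div, add_zero, sub_zero] at h
      refine h.congr fun t => ?_
      simp only [ulin, sQ, sH, hlam']
      have e1 : sW e y t = sA lam c d e y t - lam * sU c y t + sV d y t := by simp only [sA]; ring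
      rw [e1]
      field_simp
      ring)
  choose ts h1 h2 h3 h4 using fun k : ℕ => H (1 / ((k : ℝ) + 1)) (by positivity)
  have hts : Tendsto ts atTop (𝓝 0) :=
    squeeze_zero (fun k => (h1 k).1.le) (fun k => (h2 k).le) tendsto_one_div_add_atTop_nhds_zero_nat
  refine ⟨ts, fun k => -(1 / mink (c 0) (y (ts k))), fun k => F.Ib (h1 k), hts, ?_⟩
  rw [tendsto_iff_norm_sub_tendsto_zero]
  have hlim : Tendsto (fun k => (C / δ + C ^ 2 / (2 * δ ^ 2) * ‖c 0‖) * ts k) atTop (𝓝 0) := by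
    simpa using hts.const_mul (C / δ + C ^ 2 / (2 * δ ^ 2) * ‖c 0‖)
  refine squeeze_zero (fun _ => norm_nonneg _) (fun k => ?_) hlim
  have ht0 : 0 < ts k := (h1 k).1
  have ht1 : ts k ≤ 1 := (h1 k).2.trans F.t01
  obtain ⟨t, ht⟩ : ∃ t, t = ts k := ⟨_, rfl⟩
  have hI := h1 k
  have hv := h3 k
  have hu := h4 k
  beta_reduce
  rw [← ht] at ht0 ht1 hI hv hu ⊢
  obtain ⟨-, -, -, -, -, h6⟩ := B t hI
  have hsq := F.prj_sq (y t)
  have hdec := prj_decomp (c 0) (d 0) g (y t)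
  rw [hn t (F.Ib hI)] at hsq
  set u := mink (c 0) (y t) with hud
  set w := mink g (y t)
  set m := prj (c 0) (d 0) g (y t)
  rw [hv] at hsq hdec
  have hu' : δ * t ≤ |u| := by
    rwa [abs_div, abs_of_pos ht0, le_div_iff₀ ht0] at hu
  have hup : 0 < |u| := lt_of_lt_of_le (by positivity) hu'
  have hu0 : u ≠ 0 := abs_pos.1 hup
  have hdec2 : -(1 / u) • y t - g = -(1 / u) • m + (w / u) • c 0 := by
    rw [hdec]
    simp only [smul_sub, smul_add, smul_smul, zero_smul, smul_zero]
    have : -(1 / u) * u = -1 := by field_simp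
    rw [this]
    have : -(1 / u) * w = -(w / u) := by ring
    rw [this]
    simp only [neg_smul, one_smul]
    abel
  have hw : |2 * u * w| ≤ (C * t ^ 2) * (C * t ^ 2) := by
    have e1 : 2 * u * w = mink m m := by rw [hsq]; ring
    rw [e1]
    exact (abs_mink_le _ _).trans (mul_le_mul h6 h6 (norm_nonneg _) ((norm_nonneg _).trans h6))
  have hm' : ‖-(1 / u) • m‖ ≤ C / δ * t := by
    rw [norm_smul, norm_neg, norm_div, norm_one, Real.norm_eq_abs]
    calc _ ≤ 1 / (δ * t) * (C * t ^ 2) := by gcongr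
      _ = _ := by field_simp
  have hw' : |w / u| ≤ C ^ 2 / (2 * δ ^ 2) * t := by
    have e1 : w / u = (2 * u * w) / (2 * u ^ 2) := by field_simp
    rw [e1, abs_div, abs_of_pos (by positivity : 0 < 2 * u ^ 2), ← sq_abs u]
    calc _ ≤ (C * t ^ 2) * (C * t ^ 2) / (2 * (δ * t) ^ 2) := by gcongr
      _ = C ^ 2 / (2 * δ ^ 2) * t * t := by field_simp
      _ ≤ C ^ 2 / (2 * δ ^ 2) * t * 1 := by gcongr
      _ = _ := mul_one _
  rw [hdec2]
  calc _ ≤ ‖-(1 / u) • m‖ + ‖(w / u) • c 0‖ := norm_add_le _ _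
    _ ≤ C / δ * t + C ^ 2 / (2 * δ ^ 2) * t * ‖c 0‖ := by
      rw [norm_smul (w / u), Real.norm_eq_abs]
      gcongr
    _ = _ := by ring

lemma Fr.accC (F : Fr b lam t0 K c d e f g) (B : Bnd t0 C c d e f g y) (hy : IsSol lam b c d y)
    (hn : ∀ t ∈ Ioo 0 b, mink (y t) (y t) = 0) {α : ℝ} (hα : α ≠ 0)
    (hA : Tendsto (sA lam c d e y) (𝓝[>] 0) (𝓝 α)) : projAccum b y (c 0) := by
  have hC : 0 ≤ C := (abs_nonneg _).trans (B t0 ⟨F.t0pos, le_rfl⟩).1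
  have hl := F.lam1
  have hom : 0 < Real.sqrt (2 * lam - 1) := Real.sqrt_pos.2 (by linarith)
  have hlam : 2 * lam = Real.sqrt (2 * lam - 1) ^ 2 + 1 := by
    rw [Real.sq_sqrt (by linarith)]; ring
  obtain ⟨om, hom0⟩ : ∃ om, om = Real.sqrt (2 * lam - 1) := ⟨_, rfl⟩
  rw [← hom0] at hom hlam
  have hlam' : 2 * lam - 1 = om ^ 2 := by linarith
  obtain ⟨η, hη, hQ, hH⟩ := F.eta B hy hn hom hlam hA
  obtain ⟨ζ, hζ⟩ : ∃ ζ : ℂ, ζ = ((α / om : ℝ) + (α : ℝ) * Complex.I : ℂ) := ⟨_, rfl⟩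
  have hnorm : ‖ζ‖ = ‖η‖ := by
    rw [← sq_eq_sq₀ (norm_nonneg _) (norm_nonneg _), hη, ← Complex.normSq_eq_norm_sq, hζ,
      Complex.normSq_add_mul_I]
    field_simp
    ring
  have hηne : η ≠ 0 := by
    intro h
    rw [h] at hη
    have : 0 < (om ^ 2 + 1) * α ^ 2 / om ^ 2 := by positivity
    simp at hη
    rw [← hη] at this
    exact lt_irrefl _ this
  obtain ⟨s, hs, hs0, hsη⟩ := phase_seq hom hηne hnorm
  have hs1 : Tendsto s atTop (𝓝[>] 0) :=
    tendsto_nhdsWithin_iff.2 ⟨hs0, Eventually.of_forall hs⟩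
  have hre : ζ.re = α / om := by rw [hζ]; simp
  have him : ζ.im = α := by rw [hζ]; simp
  have hQ' := hQ.comp hs1
  have hH' := hH.comp hs1
  have hA' := hA.comp hs1
  have hW' := (F.clW B).comp hs1
  simp only [Function.comp_def, hsη, hre, him] at hQ' hH' hA' hW'
  set Ws := α * (1 + 1 / om ^ 2) with hWs
  have hWne : Ws ≠ 0 := mul_ne_zero hα (by positivity)
  have hW : Tendsto (fun k => s k * mink g (y (s k))) atTop (𝓝 Ws) := by
    have h := hW'.add ((((hA'.add (hQ'.div_const om)).add (hA'.div_const (om ^ 2))).add hH').div_const 2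
      |>.add_const ((α / om ^ 2 + α) / 2))
    have e1 : 0 + ((α + 0 / om + α / om ^ 2 + 0) / 2 + (α / om ^ 2 + α) / 2) = Ws := by
      rw [hWs]; field_simp; ring
    rw [e1] at h
    refine h.congr fun k => ?_
    simp only [sQ, sH, hlam']
    have e1 : sW e y (s k) = sA lam c d e y (s k) - lam * sU c y (s k) + sV d y (s k) := by
      simp only [sA]; ring
    rw [e1]
    field_simp
    ring
  have hV : Tendsto (fun k => s k * mink (d 0) (y (s k))) atTop (𝓝 0) := by
    have hid : Tendsto (id : ℝ → ℝ) (𝓝[>] 0) (𝓝 0) := tendsto_id.mono_left nhdsWithin_le_nhds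
    have a1 : Tendsto (fun t => (sV d y t - sW e y t) * t) (𝓝[>] 0) (𝓝 0) := by
      refine bmul (C := 2 * C) F.t0pos (fun t ht => ?_) hid
      obtain ⟨h1, h2, h3, -⟩ := B t ht
      rw [abs_le] at h1 h2 h3 ⊢
      constructor <;> linarith
    have h := ((hid.mul (F.clV B)).add a1).comp hs1
    simp only [mul_zero, add_zero] at h
    refine h.congr fun k => ?_
    simp only [Function.comp, id]
    ring
  have hU : Tendsto (fun k => s k * mink (c 0) (y (s k))) atTop (𝓝 0) := by
    simpa using hs0.mul ((F.bu0 B).comp hs1)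
  have hM : Tendsto (fun k => s k • prj (c 0) (d 0) g (y (s k))) atTop (𝓝 0) := by
    rw [tendsto_zero_iff_norm_tendsto_zero]
    have hl0 : Tendsto (fun t => ‖t • prj (c 0) (d 0) g (y t)‖) (𝓝[>] 0) (𝓝 0) := by
      refine lin_zero (C := C) F.t0pos fun t ht => ?_
      have ht0 := ht.1
      have ht1 : t ≤ 1 := ht.2.trans F.t01
      rw [abs_norm, norm_smul, Real.norm_eq_abs, abs_of_pos ht0]
      calc _ ≤ t * (C * t ^ 2) := by gcongr; exact (B t ht).2.2.2.2.2
        _ = C * t * t ^ 2 := by ring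
        _ ≤ C * t * 1 := by
          gcongr
          exact pow_le_one₀ ht0.le ht1
        _ = _ := mul_one _
    exact hl0.comp hs1
  have hev : ∀ᶠ k in atTop, s k < b := hs0.eventually (gt_mem_nhds (F.t0pos.trans F.t0b))
  obtain ⟨N, hN⟩ := eventually_atTop.1 hev
  have main : Tendsto (fun k => (-(s k) / Ws) • y (s k)) atTop (𝓝 (c 0)) := by
    have h := (((hM.sub (hW.smul_const (c 0))).add (hV.smul_const (d 0))).sub
      (hU.smul_const g)).const_smul (-(1 / Ws))
    have e1 : (-(1 / Ws)) • ((0 : E n) - Ws • c 0 + (0:ℝ) • d 0 - (0:ℝ) • g) = c 0 := by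
      simp only [zero_smul, add_zero, sub_zero, zero_sub, smul_neg, smul_smul]
      rw [← neg_smul]
      have : -(-(1 / Ws) * Ws) = 1 := by field_simp
      rw [this, one_smul]
    rw [e1] at h
    refine h.congr fun k => ?_
    conv_rhs => rw [prj_decomp (c 0) (d 0) g (y (s k))]
    simp only [smul_sub, smul_add, smul_smul]
    have e2 : ∀ r : ℝ, -(1 / Ws) * (s k * r) = -(s k) / Ws * r := fun r => by ring
    have e3 : -(1 / Ws) * s k = -(s k) / Ws := by ring
    simp only [e2, e3]
  exact ⟨fun k => s (k + N), fun k => -(s (k + N)) / Ws,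
    fun k => ⟨hs _, hN _ (Nat.le_add_left _ _)⟩, hs0.comp (tendsto_add_atTop_nat N),
    main.comp (tendsto_add_atTop_nat N)⟩

lemma Fr.accP (F : Fr b lam t0 K c d e f g) (B : Bnd t0 C c d e f g y) {α : ℝ} (hα : α ≠ 0)
    (hA : Tendsto (sA lam c d e y) (𝓝[>] 0) (𝓝 α)) {x : E n} (hx : projAccum b y x) :
    prj (c 0) (d 0) g x = 0 := by
  have hC : 0 ≤ C := (abs_nonneg _).trans (B t0 ⟨F.t0pos, le_rfl⟩).1
  have hK := F.K0
  have hl : 0 < lam := by linarith [F.lam1]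
  obtain ⟨ts, rs, h1, h2, h3⟩ := hx
  have hts : Tendsto ts atTop (𝓝[>] 0) :=
    tendsto_nhdsWithin_iff.2 ⟨h2, Eventually.of_forall fun i => (h1 i).1⟩
  have hα' : 0 < |α| := abs_pos.2 hα
  have hL : 0 ≤ (lam + 2) * K := by positivity
  have hev : ∀ᶠ t in 𝓝[>] (0:ℝ), t * |α| ≤ 2 * ((lam + 2) * K) * ‖y t‖ := by
    filter_upwards [hA.abs.eventually (lt_mem_nhds (half_lt_self hα')), Ioc_mem_nhdsGT F.t0pos]
      with t ha ht
    have ht0 := ht.1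
    have ht1 : t ≤ 1 := ht.2.trans F.t01
    have hv : ‖(lam / t) • c t - d t + t • e t‖ ≤ (lam + 2) * K / t := by
      have i1 : ‖(lam / t) • c t‖ ≤ lam / t * K := by
        rw [norm_smul, Real.norm_eq_abs, abs_of_pos (by positivity)]
        gcongr
        exact F.bc t (F.Ic ht)
      have i2 : ‖d t‖ ≤ K / t := (F.bd t (F.Ic ht)).trans (by
        rw [le_div_iff₀ ht0]; nlinarith)
      have i3 : ‖t • e t‖ ≤ K / t := by
        rw [norm_smul, Real.norm_eq_abs, abs_of_pos ht0]
        have := F.be t (F.Ic ht)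
        calc _ ≤ 1 * K := by gcongr
          _ ≤ _ := by rw [le_div_iff₀ ht0]; nlinarith
      calc _ ≤ ‖(lam / t) • c t - d t‖ + ‖t • e t‖ := norm_add_le _ _
        _ ≤ ‖(lam / t) • c t‖ + ‖d t‖ + ‖t • e t‖ := by gcongr; exact norm_sub_le _ _
        _ ≤ lam / t * K + K / t + K / t := by gcongr
        _ = _ := by ring
    rw [Fr.sA_eq] at ha
    have h5 := ha.trans_le ((abs_mink_le _ _).trans (mul_le_mul_of_nonneg_right hv (norm_nonneg _)))
    have h6 : (lam + 2) * K / t * ‖y t‖ = (lam + 2) * K * ‖y t‖ / t := by ring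
    rw [h6, lt_div_iff₀ ht0] at h5
    linarith
  have hlim : Tendsto (fun i => rs i • prj (c 0) (d 0) g (y (ts i))) atTop
      (𝓝 (prj (c 0) (d 0) g x)) := by
    refine (((prj (c 0) (d 0) g).continuous.tendsto x).comp h3).congr fun i => ?_
    simp
  have hz : Tendsto (fun i => rs i • prj (c 0) (d 0) g (y (ts i))) atTop (𝓝 0) := by
    have hb : Tendsto (fun i => (C * (2 * ((lam + 2) * K)) / |α|) * (‖rs i • y (ts i)‖ * ts i)) atTop
        (𝓝 0) := by
      simpa using (h3.norm.mul h2).const_mul (C * (2 * ((lam + 2) * K)) / |α|)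
    refine squeeze_zero_norm' ?_ hb
    filter_upwards [hts.eventually hev, hts.eventually (Ioc_mem_nhdsGT F.t0pos)] with i i1 i2
    have ht0 := (h1 i).1
    have h6 := (B _ i2).2.2.2.2.2
    rw [norm_smul, norm_smul]
    calc _ ≤ ‖rs i‖ * (C * ts i ^ 2) := by gcongr
      _ = (C / |α|) * ‖rs i‖ * ts i * (ts i * |α|) := by field_simp
      _ ≤ (C / |α|) * ‖rs i‖ * ts i * (2 * ((lam + 2) * K) * ‖y (ts i)‖) := by gcongr
      _ = _ := by ring
  exact tendsto_nhds_unique hlim hz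

lemma prop_of_lim {x z : E n} {r : ℝ → ℝ}
    (hx : Tendsto (fun t : ℝ => r t • y t) (𝓝[>] 0) (𝓝 x)) (hz : projAccum b y z) (A D : E n) :
    mink x A * mink z D = mink x D * mink z A := by
  obtain ⟨ts, rs, h1, h2, h3⟩ := hz
  have hts : Tendsto ts atTop (𝓝[>] 0) :=
    tendsto_nhdsWithin_iff.2 ⟨h2, Eventually.of_forall fun i => (h1 i).1⟩
  have hx' := hx.comp hts
  have l1 := (tendsto_mink hx' (tendsto_const_nhds (x := A))).mul
    (tendsto_mink h3 (tendsto_const_nhds (x := D)))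
  have l2 := (tendsto_mink hx' (tendsto_const_nhds (x := D))).mul
    (tendsto_mink h3 (tendsto_const_nhds (x := A)))
  refine tendsto_nhds_unique l1 (l2.congr fun i => ?_)
  simp only [Function.comp, mink_smul_left]
  ring

lemma Fr.final (F : Fr b lam t0 K c d e f g) (B : Bnd t0 C c d e f g y) (hy : IsSol lam b c d y)
    (hn : ∀ t ∈ Ioo 0 b, mink (y t) (y t) = 0) {α : ℝ} (hα : α ≠ 0)
    (hA : Tendsto (sA lam c d e y) (𝓝[>] 0) (𝓝 α)) :
    (∀ x : E n, x ≠ 0 → projAccum b y x →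
      x ∈ Submodule.span ℝ ({c 0, d 0, e 0} : Set (E n)) ∧ mink x x = 0) ∧
    projAccum b y (c 0) ∧
    (∃ cb : E n, cb ∈ Submodule.span ℝ ({c 0, d 0, e 0} : Set (E n)) ∧
      mink cb cb = 0 ∧ mink cb (c 0) = -1 ∧ mink cb (d 0) = 0) ∧
    (∀ cb : E n, cb ∈ Submodule.span ℝ ({c 0, d 0, e 0} : Set (E n)) →
      mink cb cb = 0 → mink cb (c 0) = -1 → mink cb (d 0) = 0 → projAccum b y cb) ∧
    ¬ ∃ x : E n, x ≠ 0 ∧ ∃ r : ℝ → ℝ, (∀ t ∈ Set.Ioo (0:ℝ) b, r t ≠ 0) ∧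
      Tendsto (fun t : ℝ => r t • y t) (𝓝[>] 0) (𝓝 x) := by
  have z := F.z
  obtain ⟨g1, g2, g3⟩ := F.gf
  have aG := F.accG B hy hn hα hA
  have aC := F.accC B hy hn hα hA
  have sc : c 0 ∈ Submodule.span ℝ ({c 0, d 0, e 0} : Set (E n)) := Submodule.subset_span (by simp)
  have sd : d 0 ∈ Submodule.span ℝ ({c 0, d 0, e 0} : Set (E n)) := Submodule.subset_span (by simp)
  have se : e 0 ∈ Submodule.span ℝ ({c 0, d 0, e 0} : Set (E n)) := Submodule.subset_span (by simp)
  have sg : g ∈ Submodule.span ℝ ({c 0, d 0, e 0} : Set (E n)) := by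
    rw [F.g0]; exact Submodule.add_mem _ se (Submodule.smul_mem _ _ sc)
  refine ⟨fun x hx0 hx => ⟨?_, ?_⟩, aC, ⟨g, sg, g3, ?_, ?_⟩, ?_, ?_⟩
  · have hP := F.accP B hα hA hx
    rw [prj_decomp (c 0) (d 0) g x, hP]
    refine Submodule.sub_mem _ (Submodule.add_mem _ (Submodule.sub_mem _ (Submodule.zero_mem _) ?_) ?_) ?_
    · exact Submodule.smul_mem _ _ sc
    · exact Submodule.smul_mem _ _ sd
    · exact Submodule.smul_mem _ _ sg
  · obtain ⟨ts, rs, h1, h2, h3⟩ := hx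
    refine tendsto_nhds_unique (tendsto_mink h3 h3) (tendsto_const_nhds.congr fun i => ?_)
    rw [mink_smul_left, mink_smul_right, hn _ (h1 i)]
    ring
  · rw [mink_comm, g1]
  · rw [mink_comm, g2]
  · intro cb hcb k1 k2 k3
    obtain ⟨p, q, r, rfl⟩ := Submodule.mem_span_triple.1 hcb
    have hce := F.mce 0 z
    have hde := F.mde 0 z
    have hcd := F.mcd 0 z
    simp only [mink_add_right, mink_add_left, mink_smul_right, mink_smul_left, F.mcc 0 z, F.mdd 0 z,
      hce, hde, hcd, mink_comm (e 0) (c 0), mink_comm (d 0) (c 0), mink_comm (e 0) (d 0)] at k1 k2 k3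
    have hr : r = 1 := by linarith
    have hq : q = 0 := by linarith
    subst hr hq
    have hp : p = mink (e 0) (e 0) / 2 := by linarith
    have : p • c 0 + (0:ℝ) • d 0 + (1:ℝ) • e 0 = g := by
      rw [F.g0, hp, zero_smul, one_smul, add_zero, add_comm]
    rw [this]
    exact aG
  · rintro ⟨x, hx0, r, -, hr⟩
    have p1 := prop_of_lim hr aC (c 0) g
    rw [g1, F.mcc 0 z, mul_zero] at p1
    have p2 : mink x (c 0) = 0 := by linarith
    apply hx0
    refine mink_nondeg fun A => ?_
    have p3 := prop_of_lim hr aG A (c 0)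
    rw [p2, mink_comm g, g1, zero_mul] at p3
    linarith

end fin2

/-- STATEMENT 19 (Theorem 5.7, exceptional case: a Darboux transform whose initial point
lies on the limit circle of the Calapso transform approaches the curvature circle at the
singularity, has at least two distinct accumulation points there, hence does not
converge). -/
theorem stmt19 {n : ℕ} (ε b : ℝ) (hε : 0 < ε) (hb : 0 < b)
    (c : ℝ → E n) (hc : ContDiffOn ℝ (⊤ : ℕ∞) c (Set.Ioo (-ε) b))
    (hcnull : ∀ t ∈ Set.Ioo (-ε) b, mink (c t) (c t) = 0)
    (hcne : ∀ t ∈ Set.Ioo (-ε) b, c t ≠ 0)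
    (hcreg : ∀ t ∈ Set.Ioo (-ε) b, mink (deriv c t) (deriv c t) = 1)
    (lam : ℝ) (hlam : 1 < 2 * lam)
    (p : ℝ) (hp : p ∈ Set.Ioo (0:ℝ) b)
    (T : ℝ → E n →L[ℝ] E n) (hTp : T p = 1)
    (hT : ∀ t ∈ Set.Ioo (0:ℝ) b,
      HasDerivAt T ((lam / t ^ 2) • (T t * wedge (c t) (deriv c t))) t)
    (ch : ℝ → E n)
    (hchne : ∀ t ∈ Set.Ioo (0:ℝ) b, ch t ≠ 0)
    (hchnull : ∀ t ∈ Set.Ioo (0:ℝ) b, mink (ch t) (ch t) = 0)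
    (hch : ∀ t ∈ Set.Ioo (0:ℝ) b, HasDerivAt ch
      ((-(lam / t ^ 2)) •
        (mink (c t) (ch t) • deriv c t - mink (deriv c t) (ch t) • c t)) t)
    (haccum : projAccum b (fun t => (T t) (c t)) (ch p)) :
    (∀ x : E n, x ≠ 0 → projAccum b ch x →
      x ∈ Submodule.span ℝ ({c 0, deriv c 0, deriv (deriv c) 0} : Set (E n)) ∧
        mink x x = 0) ∧
    projAccum b ch (c 0) ∧
    (∃ cb : E n, cb ∈ Submodule.span ℝ ({c 0, deriv c 0, deriv (deriv c) 0} : Set (E n)) ∧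
      mink cb cb = 0 ∧ mink cb (c 0) = -1 ∧ mink cb (deriv c 0) = 0) ∧
    (∀ cb : E n, cb ∈ Submodule.span ℝ ({c 0, deriv c 0, deriv (deriv c) 0} : Set (E n)) →
      mink cb cb = 0 → mink cb (c 0) = -1 → mink cb (deriv c 0) = 0 →
      projAccum b ch cb) ∧
    ¬ ∃ x : E n, x ≠ 0 ∧ ∃ r : ℝ → ℝ, (∀ t ∈ Set.Ioo (0:ℝ) b, r t ≠ 0) ∧
      Tendsto (fun t : ℝ => r t • ch t) (𝓝[>] 0) (𝓝 x) := by
  obtain ⟨t0, K, F⟩ := exists_Fr hε hb hc hcnull hcreg hlam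
  have hy : IsSol lam b c (deriv c) ch := hch
  obtain ⟨α, C, hα, -, hA, B⟩ := F.key hp hTp hT (hchne p hp) hy haccum
  exact F.final (C := C) B hy hchnull hα hA
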